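/- arXiv:2303.17140 — 3 statements merged into one kernel-verified Lean document; each statement's English description precedes it below -/
import Mathlib

section
/- Let φ: ℕ → (0,∞) be a non-decreasing function. If the series Σ_{n=1}^∞ (φ(n) + n·(log φ(n))²)/φ(n)² converges, then the set F₂(φ) has Lebesgue measure zero. -/
/-!
Since `φ → ∞` is non-decreasing, taking for `n` the larger of the two indices shows that a point
of `F2 φ` lies, for infinitely many `l`, in the set where `a_l a_{l+1} ≥ φ(l)` and
`a_k a_{k+1} ≥ φ(l)` for some `k < l` (`F2_subset`). By Borel-Cantelli it remains to bound the
measure of this set by a constant times `(t + l (log t)²) / t²` with `t = φ(l)`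
(`prob_badSet_le`).

The partial quotients are controlled through the probability measures `prob θ` on `(0,1)` with
density `(1 + θ) / (1 + θ x)²`, where `θ ∈ [0,1]`; `prob 0` is Lebesgue measure. This family is
closed under conditioning on the first digit: the image under the Gauss map of `prob θ`
restricted to `a_1 = m` is a multiple of `prob (1 / (m + θ))` (`prob_branch`). Hence a bound on
the probability of `B` that is uniform in `θ` passes to `T⁻ⁿ B`, and to the conditional
probability of `T⁻¹ B` given `a_1`, or of `T⁻² B` given `(a_1, a_2)`; this takes the place of
independence.

Uniformly in `θ`, all densities are at most `2`, so `a_1 ≥ s` has probability at most `2 / s`.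
Summing over the value of one digit, `a_1 a_2 ≥ t` has probability `O(log t / t)`, while
`a_1 a_2 ≥ t` and `a_2 a_3 ≥ t` hold together with probability `O(1 / t)`. The single pair of
adjacent products contributes `O(1 / t)`, and each of the at most `l` other pairs contributes
`O((log t / t)²)`.
-/

open scoped ENNReal
open MeasureTheory Filter

/-- The Gauss map `T(x) = 1/x - ⌊1/x⌋`. -/
noncomputable def gaussMap (x : ℝ) : ℝ := 1 / x - ⌊1 / x⌋

/-- The `n`-th partial quotient `a_n(x) = ⌊1 / T^{n-1}(x)⌋` (for `n ≥ 1`). -/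
noncomputable def pq (x : ℝ) (n : ℕ) : ℕ := ⌊1 / (gaussMap^[n - 1] x)⌋₊

/-- The set `F₂(φ)` of irrational `x ∈ (0,1)` such that for infinitely many `n` there are
`1 ≤ k ≠ l ≤ n` with `a_k a_{k+1} ≥ φ(n)` and `a_l a_{l+1} ≥ φ(n)`. -/
def F2 (φ : ℕ → ℝ) : Set ℝ :=
  {x | x ∈ Set.Ioo (0 : ℝ) 1 ∧ Irrational x ∧
    {n : ℕ | ∃ k l : ℕ, 1 ≤ k ∧ k ≤ n ∧ 1 ≤ l ∧ l ≤ n ∧ k ≠ l ∧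
      φ n ≤ (pq x k : ℝ) * (pq x (k + 1) : ℝ) ∧
      φ n ≤ (pq x l : ℝ) * (pq x (l + 1) : ℝ)}.Infinite}

namespace GaussChain

/-! ### The family of measures and its behaviour under the Gauss map -/

/-- The irrational points of `(0,1)`. -/
def irrUnit : Set ℝ := {x | x ∈ Set.Ioo (0 : ℝ) 1 ∧ Irrational x}

/-- The density `(1 + θ) / (1 + θ x)²` of `prob θ` with respect to Lebesgue measure on `(0,1)`. -/
noncomputable def dens (θ x : ℝ) : ℝ := (1 + θ) / (1 + θ * x) ^ 2

/-- The measure on the irrationals of `(0,1)` with density `dens θ`; it is a probability measure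
for `θ ∈ [0,1]`. -/
noncomputable def prob (θ : ℝ) : Measure ℝ :=
  (volume.restrict irrUnit).withDensity fun x => ENNReal.ofReal (dens θ x)

/-- The probability under `prob θ` that the first partial quotient is `m`, for `m ≥ 1`. -/
noncomputable def weight (θ : ℝ) (m : ℕ) : ℝ := (1 + θ) / ((m + θ) * (m + 1 + θ))

lemma measurableSet_irrUnit : MeasurableSet irrUnit := by
  have h : MeasurableSet {x : ℝ | Irrational x} :=
    (Set.countable_range ((↑) : ℚ → ℝ)).measurableSet.compl
  exact measurableSet_Ioo.inter h

lemma measurable_gaussMap : Measurable gaussMap := by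
  have h1 : Measurable fun x : ℝ => 1 / x := by fun_prop
  have h2 : Measurable fun x : ℝ => ((⌊1 / x⌋ : ℤ) : ℝ) :=
    (measurable_from_top (f := fun z : ℤ => (z : ℝ))).comp (Int.measurable_floor.comp h1)
  exact h1.sub h2

lemma measurable_pq (n : ℕ) : Measurable fun x => pq x n := by
  have h1 : Measurable fun x : ℝ => 1 / (gaussMap^[n - 1] x) :=
    measurable_const.div (measurable_gaussMap.iterate _)
  exact Nat.measurable_floor.comp h1

lemma measurable_dens (θ : ℝ) : Measurable (dens θ) := by
  unfold dens; fun_prop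

lemma pq_gaussMap (x : ℝ) (n : ℕ) : pq x (n + 2) = pq (gaussMap x) (n + 1) := by
  simp [pq, Function.iterate_succ_apply]

lemma pq_one (x : ℝ) : pq x 1 = ⌊1 / x⌋₊ := by simp [pq]

lemma pq_iterate (x : ℝ) (n k : ℕ) : pq (gaussMap^[n] x) (k + 1) = pq x (n + k + 1) := by
  simp only [pq, Nat.add_sub_cancel, ← Function.iterate_add_apply, Nat.add_comm]

lemma one_le_pq_one {x : ℝ} (hx : x ∈ irrUnit) : 1 ≤ pq x 1 := by
  rw [pq_one, Nat.one_le_floor_iff]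
  exact (one_le_div hx.1.1).2 hx.1.2.le

lemma prob_apply (θ : ℝ) {A : Set ℝ} (hA : MeasurableSet A) :
    prob θ A = ∫⁻ x in A ∩ irrUnit, ENNReal.ofReal (dens θ x) := by
  rw [prob, withDensity_apply _ hA, Measure.restrict_restrict hA]

/-- Among the irrationals of `(0,1)`, the part of `T⁻¹ A` on which `a_1 = m` is the image of `A`
under the inverse branch `y ↦ 1 / (m + y)`. -/
lemma branch_image {m : ℕ} (hm : 1 ≤ m) (A : Set ℝ) :
    ({x | pq x 1 = m} ∩ gaussMap ⁻¹' A) ∩ irrUnit =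
      (fun y : ℝ => 1 / (m + y)) '' (A ∩ irrUnit) := by
  have hm' : (1 : ℝ) ≤ m := by exact_mod_cast hm
  ext x
  constructor
  · rintro ⟨⟨h1, h2⟩, ⟨hx0, hx1⟩, hirr⟩
    have hinv : Irrational (1 / x) := by simpa using hirr.inv
    have hpos : 0 < 1 / x := by positivity
    have hfl : ((⌊1 / x⌋ : ℤ) : ℝ) = m := by
      rw [Set.mem_ofPred_eq, pq_one] at h1
      rw [← h1]
      exact (natCast_floor_eq_intCast_floor hpos.le).symm
    have hT : gaussMap x = 1 / x - m := by rw [gaussMap, hfl]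
    have hTirr : Irrational (gaussMap x) := by rw [hT]; exact hinv.sub_natCast m
    have hT0 : 0 ≤ gaussMap x := Int.fract_nonneg (1 / x)
    have hT1 : gaussMap x < 1 := Int.fract_lt_one (1 / x)
    refine ⟨gaussMap x, ⟨h2, ⟨lt_of_le_of_ne hT0 hTirr.ne_zero.symm, hT1⟩, hTirr⟩, ?_⟩
    simp [hT]
  · rintro ⟨y, ⟨hyA, ⟨hy0, hy1⟩, hirr⟩, rfl⟩
    have hfl : ⌊(m : ℝ) + y⌋ = (m : ℤ) := by
      rw [Int.floor_eq_iff]; constructor <;> push_cast <;> linarith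
    refine ⟨⟨?_, ?_⟩, ⟨by positivity, ?_⟩, ?_⟩
    · simp only [Set.mem_ofPred_eq, pq_one, one_div_one_div]
      rw [Nat.floor_eq_iff (by positivity)]; constructor <;> linarith
    · have : gaussMap (1 / (m + y)) = y := by
        simp only [gaussMap, one_div_one_div, hfl]; simp
      rw [Set.mem_preimage, this]; exact hyA
    · change 1 / ((m : ℝ) + y) < 1
      rw [div_lt_one (by linarith)]; linarith
    · have := (hirr.natCast_add m).inv
      simpa using this

/-- The Markov property of the family `prob`: given `a_1 = m`, the law of `T x` under `prob θ` is
`prob (1 / (m + θ))`. The change of variables `x = 1 / (m + y)` turns `1 + θ x` into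
`(m + y + θ) / (m + y)`, which keeps the density in the family. -/
lemma prob_branch {θ : ℝ} (hθ : θ ∈ Set.Icc (0 : ℝ) 1) {m : ℕ} (hm : 1 ≤ m) {A : Set ℝ}
    (hA : MeasurableSet A) :
    prob θ ({x | pq x 1 = m} ∩ gaussMap ⁻¹' A) =
      ENNReal.ofReal (weight θ m) * prob (1 / (m + θ)) A := by
  have hm' : (1 : ℝ) ≤ m := by exact_mod_cast hm
  obtain ⟨h0, h1⟩ := hθ
  have hmeas : MeasurableSet ({x | pq x 1 = m} ∩ gaussMap ⁻¹' A) :=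
    ((measurable_pq 1) (measurableSet_singleton m)).inter (measurable_gaussMap hA)
  have hpos : ∀ y ∈ A ∩ irrUnit, 0 < (m : ℝ) + y := fun y hy => by
    have := hy.2.1.1; linarith
  rw [prob_apply _ hmeas, prob_apply _ hA, branch_image hm,
    lintegral_image_eq_lintegral_abs_deriv_mul (hA.inter measurableSet_irrUnit)
      (f' := fun y => -1 / ((m : ℝ) + y) ^ 2), ← lintegral_const_mul]
  · refine setLIntegral_congr_fun (hA.inter measurableSet_irrUnit) fun y hy => ?_
    have hp := hpos y hy
    have hy0 : 0 < y := hy.2.1.1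
    have hw : 0 ≤ weight θ m := by unfold weight; positivity
    rw [← ENNReal.ofReal_mul (abs_nonneg _), ← ENNReal.ofReal_mul hw, abs_div, abs_neg, abs_one,
      abs_of_pos (by positivity : (0 : ℝ) < (m + y) ^ 2)]
    congr 1
    unfold weight dens
    have e1 : 1 + θ * (1 / ((m : ℝ) + y)) = (m + y + θ) / (m + y) := by field_simp
    have e2 : 1 + 1 / ((m : ℝ) + θ) * y = (m + y + θ) / (m + θ) := by field_simp; ring
    have e3 : 1 + 1 / ((m : ℝ) + θ) = (m + 1 + θ) / (m + θ) := by field_simp; ring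
    rw [e1, e2, e3]
    field_simp
  · exact (measurable_dens _).ennreal_ofReal
  · intro y hy
    have hp := hpos y hy
    have : HasDerivAt (fun y : ℝ => 1 / ((m : ℝ) + y)) (-1 / ((m : ℝ) + y) ^ 2) y := by
      have := ((hasDerivAt_id y).const_add (m : ℝ)).inv (by simpa using hp.ne')
      simp only [one_div]
      exact this
    exact this.hasDerivWithinAt
  · intro y hy z hz h
    have hp := hpos y hy
    have hq := hpos z hz
    simpa using h

lemma dens_le {θ x : ℝ} (hθ : θ ∈ Set.Icc (0 : ℝ) 1) (hx : 0 ≤ x) : dens θ x ≤ 2 := by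
  obtain ⟨h0, h1⟩ := hθ
  have h2 : 0 ≤ θ * x := by positivity
  unfold dens
  rw [div_le_iff₀ (by positivity)]
  nlinarith

lemma volume_irrUnit_ae : irrUnit =ᵐ[volume] Set.Ioc (0 : ℝ) 1 := by
  refine EventuallyEq.trans ?_ Ioo_ae_eq_Ioc
  have h : ∀ᵐ x : ℝ, Irrational x :=
    (Set.countable_range ((↑) : ℚ → ℝ)).ae_notMem volume
  filter_upwards [h] with x hx
  exact propext ⟨fun h => h.1, fun h => ⟨h, hx⟩⟩

lemma prob_univ {θ : ℝ} (hθ : θ ∈ Set.Icc (0 : ℝ) 1) : prob θ Set.univ = 1 := by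
  obtain ⟨h0, h1⟩ := hθ
  rw [prob_apply _ MeasurableSet.univ, Set.univ_inter, setLIntegral_congr volume_irrUnit_ae]
  have hcont : ContinuousOn (dens θ) (Set.uIcc 0 1) := by
    unfold dens
    rw [Set.uIcc_of_le zero_le_one]
    refine continuousOn_const.div (by fun_prop) fun x hx => ?_
    have := mul_nonneg h0 hx.1
    positivity
  have hint := hcont.intervalIntegrable (μ := volume)
  have hval : ∫ x in (0 : ℝ)..1, dens θ x = 1 := by
    rw [intervalIntegral.integral_eq_sub_of_hasDerivAt
      (f := fun x => (1 + θ) * x / (1 + θ * x)) ?_ hint]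
    · field_simp
      simp
    · intro x hx
      rw [Set.uIcc_of_le zero_le_one] at hx
      have := mul_nonneg h0 hx.1
      have hne : 1 + θ * x ≠ 0 := by positivity
      have h := ((hasDerivAt_id x).const_mul (1 + θ)).div
        (((hasDerivAt_id x).const_mul θ).const_add 1) hne
      refine h.congr_deriv ?_
      change ((1 + θ) * 1 * (1 + θ * x) - (1 + θ) * x * (θ * 1)) / (1 + θ * x) ^ 2 =
        (1 + θ) / (1 + θ * x) ^ 2
      congr 1
      ring
  rw [← ofReal_integral_eq_lintegral_ofReal]
  · rw [← intervalIntegral.integral_of_le zero_le_one, hval, ENNReal.ofReal_one]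
  · exact (intervalIntegrable_iff_integrableOn_Ioc_of_le zero_le_one).1 hint
  · refine Eventually.of_forall fun x => ?_
    simp only [dens, Pi.zero_apply]
    positivity

lemma state_mem {θ : ℝ} (hθ : θ ∈ Set.Icc (0 : ℝ) 1) {m : ℕ} (hm : 1 ≤ m) :
    1 / (m + θ) ∈ Set.Icc (0 : ℝ) 1 := by
  have hm' : (1 : ℝ) ≤ m := by exact_mod_cast hm
  obtain ⟨h0, h1⟩ := hθ
  refine ⟨by positivity, ?_⟩
  rw [div_le_one (by linarith)]; linarith

/-- Summation over the value of the first partial quotient. The value `0` is excluded, as it does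
not occur on `(0,1)`. -/
lemma prob_le_of_fiber (θ : ℝ) {E E' : Set ℝ} (hE : MeasurableSet E) (hE' : MeasurableSet E')
    (b : ℝ≥0∞) (h : ∀ m, 1 ≤ m →
      prob θ ({x | pq x 1 = m} ∩ E) ≤ b * prob θ ({x | pq x 1 = m} ∩ E')) :
    prob θ E ≤ b * prob θ E' := by
  have hf : ∀ m : ℕ, MeasurableSet {x | pq x 1 = m} := fun m =>
    (measurable_pq 1) (measurableSet_singleton m)
  have key : ∀ F : Set ℝ, MeasurableSet F → prob θ F = ∑' m, prob θ ({x | pq x 1 = m} ∩ F) := by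
    intro F hF
    rw [← measure_iUnion]
    · congr 1
      ext x
      simp
    · intro i j hij
      refine Set.disjoint_left.2 fun x hx hx' => hij ?_
      exact hx.1.symm.trans hx'.1
    · exact fun m => (hf m).inter hF
  rw [key E hE, key E' hE', ← ENNReal.tsum_mul_left]
  refine ENNReal.tsum_le_tsum fun m => ?_
  rcases Nat.eq_zero_or_pos m with rfl | hm
  · rw [prob_apply _ ((hf 0).inter hE)]
    have : ({x | pq x 1 = 0} ∩ E) ∩ irrUnit = ∅ := by
      ext x
      simp only [Set.mem_inter_iff, Set.mem_ofPred_eq, Set.mem_empty_iff_false, iff_false]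
      rintro ⟨⟨h0, -⟩, hx⟩
      have := one_le_pq_one hx
      omega
    simp [this]
  · exact h m hm

/-- A bound for `B` uniform in the parameter bounds the conditional probability of `T⁻¹ B` given
any event in `a_1`. -/
lemma prob_first_le {B : Set ℝ} (hB : MeasurableSet B) {b : ℝ≥0∞}
    (hb : ∀ θ ∈ Set.Icc (0 : ℝ) 1, prob θ B ≤ b) (R : Set ℕ) {θ : ℝ}
    (hθ : θ ∈ Set.Icc (0 : ℝ) 1) :
    prob θ ({x | pq x 1 ∈ R} ∩ gaussMap ⁻¹' B) ≤ b * prob θ {x | pq x 1 ∈ R} := by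
  have hR : MeasurableSet {x | pq x 1 ∈ R} := (measurable_pq 1) (MeasurableSet.of_discrete (s := R))
  refine prob_le_of_fiber θ (hR.inter (measurable_gaussMap hB)) hR b fun m hm => ?_
  by_cases hmR : m ∈ R
  · have e1 : {x | pq x 1 = m} ∩ ({x | pq x 1 ∈ R} ∩ gaussMap ⁻¹' B) =
        {x | pq x 1 = m} ∩ gaussMap ⁻¹' B := by
      ext x; simp only [Set.mem_inter_iff, Set.mem_ofPred_eq]; grind
    have e2 : {x | pq x 1 = m} ∩ {x | pq x 1 ∈ R} =
        {x | pq x 1 = m} ∩ gaussMap ⁻¹' Set.univ := by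
      ext x; simp only [Set.mem_inter_iff, Set.mem_ofPred_eq, Set.preimage_univ]; grind
    rw [e1, e2, prob_branch hθ hm hB, prob_branch hθ hm MeasurableSet.univ,
      prob_univ (state_mem hθ hm), mul_one, mul_comm]
    gcongr
    exact hb _ (state_mem hθ hm)
  · have e1 : {x | pq x 1 = m} ∩ ({x | pq x 1 ∈ R} ∩ gaussMap ⁻¹' B) = ∅ := by
      ext x; simp only [Set.mem_inter_iff, Set.mem_ofPred_eq, Set.mem_empty_iff_false]; grind
    rw [e1, measure_empty]; exact zero_le

lemma prob_iterate_le {B : Set ℝ} (hB : MeasurableSet B) {b : ℝ≥0∞}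
    (hb : ∀ θ ∈ Set.Icc (0 : ℝ) 1, prob θ B ≤ b) (n : ℕ) :
    ∀ θ ∈ Set.Icc (0 : ℝ) 1, prob θ (gaussMap^[n] ⁻¹' B) ≤ b := by
  induction n with
  | zero => simpa using hb
  | succ n ih =>
    intro θ hθ
    have h := prob_first_le ((measurable_gaussMap.iterate n) hB) ih Set.univ hθ
    simp only [Set.mem_univ, Set.ofPred_true, Set.univ_inter, prob_univ hθ, mul_one] at h
    rwa [Function.iterate_succ, Set.preimage_comp]

/-- A bound for `B` uniform in the parameter bounds the conditional probability of `T⁻² B` given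
any event in `(a_1, a_2)`. -/
lemma prob_pair_le {B : Set ℝ} (hB : MeasurableSet B) {b : ℝ≥0∞}
    (hb : ∀ θ ∈ Set.Icc (0 : ℝ) 1, prob θ B ≤ b) (R : Set (ℕ × ℕ)) {θ : ℝ}
    (hθ : θ ∈ Set.Icc (0 : ℝ) 1) :
    prob θ ({x | (pq x 1, pq x 2) ∈ R} ∩ gaussMap^[2] ⁻¹' B) ≤
      b * prob θ {x | (pq x 1, pq x 2) ∈ R} := by
  have hR : MeasurableSet {x | (pq x 1, pq x 2) ∈ R} :=
    ((measurable_pq 1).prodMk (measurable_pq 2)) (MeasurableSet.of_discrete (s := R))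
  refine prob_le_of_fiber θ (hR.inter ((measurable_gaussMap.iterate 2) hB)) hR b fun m hm => ?_
  have hRm : MeasurableSet {x | pq x 1 ∈ {j | (m, j) ∈ R}} :=
    (measurable_pq 1) (MeasurableSet.of_discrete (s := {j | (m, j) ∈ R}))
  have e1 : {x | pq x 1 = m} ∩ ({x | (pq x 1, pq x 2) ∈ R} ∩ gaussMap^[2] ⁻¹' B) =
      {x | pq x 1 = m} ∩ gaussMap ⁻¹' ({x | pq x 1 ∈ {j | (m, j) ∈ R}} ∩ gaussMap ⁻¹' B) := by
    ext x
    have := pq_gaussMap x 0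
    simp only [Set.mem_inter_iff, Set.mem_ofPred_eq, Set.mem_preimage, Function.iterate_succ,
      Function.iterate_zero, Function.comp]
    grind
  have e2 : {x | pq x 1 = m} ∩ {x | (pq x 1, pq x 2) ∈ R} =
      {x | pq x 1 = m} ∩ gaussMap ⁻¹' {x | pq x 1 ∈ {j | (m, j) ∈ R}} := by
    ext x
    have := pq_gaussMap x 0
    simp only [Set.mem_inter_iff, Set.mem_ofPred_eq, Set.mem_preimage]
    grind
  rw [e1, e2, prob_branch hθ hm (hRm.inter (measurable_gaussMap hB)), prob_branch hθ hm hRm,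
    mul_left_comm]
  gcongr
  exact prob_first_le hB hb _ (state_mem hθ hm)

/-! ### Probabilities of large products -/

lemma prob_large_le {θ : ℝ} (hθ : θ ∈ Set.Icc (0 : ℝ) 1) {s : ℝ} (hs : 0 < s) :
    prob θ {x | s ≤ pq x 1} ≤ ENNReal.ofReal (2 / s) := by
  have hmeas : MeasurableSet {x | s ≤ (pq x 1 : ℝ)} :=
    (measurable_pq 1) (MeasurableSet.of_discrete (s := {j : ℕ | s ≤ (j : ℝ)}))
  rw [prob_apply _ hmeas]
  have hsub : {x | s ≤ (pq x 1 : ℝ)} ∩ irrUnit ⊆ Set.Icc 0 (1 / s) := by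
    rintro x ⟨h1, ⟨hx0, hx1⟩, -⟩
    refine ⟨hx0.le, ?_⟩
    rw [Set.mem_ofPred_eq, pq_one] at h1
    have h2 := h1.trans (Nat.floor_le (by positivity))
    rw [le_div_iff₀ hx0] at h2
    rw [le_div_iff₀ hs]; linarith
  calc ∫⁻ x in {x | s ≤ (pq x 1 : ℝ)} ∩ irrUnit, ENNReal.ofReal (dens θ x)
      ≤ ∫⁻ x in Set.Icc 0 (1 / s), ENNReal.ofReal (dens θ x) := lintegral_mono_set hsub
    _ ≤ ∫⁻ x in Set.Icc 0 (1 / s), ENNReal.ofReal 2 :=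
        setLIntegral_mono' measurableSet_Icc fun x hx =>
          ENNReal.ofReal_le_ofReal (dens_le hθ hx.1)
    _ = ENNReal.ofReal (2 / s) := by
        rw [setLIntegral_const, Real.volume_Icc, ← ENNReal.ofReal_mul (by norm_num)]
        congr 1; ring

lemma weight_le {θ : ℝ} (hθ : θ ∈ Set.Icc (0 : ℝ) 1) {m : ℕ} (hm : 1 ≤ m) :
    weight θ m ≤ 2 / m ^ 2 := by
  have hm' : (1 : ℝ) ≤ m := by exact_mod_cast hm
  obtain ⟨h0, h1⟩ := hθ
  unfold weight
  gcongr <;> nlinarith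

lemma prob_eq_large_le {θ : ℝ} (hθ : θ ∈ Set.Icc (0 : ℝ) 1) {m : ℕ} (hm : 1 ≤ m) {t : ℝ}
    (ht : 0 < t) :
    prob θ {x | pq x 1 = m ∧ t / m ≤ pq x 2} ≤ ENNReal.ofReal (4 / (m * t)) := by
  have hm' : (0 : ℝ) < m := by exact_mod_cast hm
  have hmeas : MeasurableSet {x | t / m ≤ (pq x 1 : ℝ)} :=
    (measurable_pq 1) (MeasurableSet.of_discrete (s := {j : ℕ | t / m ≤ (j : ℝ)}))
  have e : {x | pq x 1 = m ∧ t / m ≤ pq x 2} =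
      {x | pq x 1 = m} ∩ gaussMap ⁻¹' {x | t / m ≤ (pq x 1 : ℝ)} := by
    ext x
    have := pq_gaussMap x 0
    simp only [zero_add] at this
    simp [this]
  rw [e, prob_branch hθ hm hmeas]
  calc _ ≤ ENNReal.ofReal (2 / m ^ 2) * ENNReal.ofReal (2 / (t / m)) := by
        gcongr
        · exact weight_le hθ hm
        · exact prob_large_le (state_mem hθ hm) (by positivity)
    _ = _ := by
        rw [← ENNReal.ofReal_mul (by positivity)]
        congr 1
        field_simp
        norm_num

/-- The set where `a_1 a_2 ≥ t`. -/
def prodSet (t : ℝ) : Set ℝ := {x | t ≤ (pq x 1 : ℝ) * pq x 2}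

lemma measurableSet_prodSet (t : ℝ) : MeasurableSet (prodSet t) :=
  ((measurable_pq 1).prodMk (measurable_pq 2))
    (MeasurableSet.of_discrete (s := {p : ℕ × ℕ | t ≤ (p.1 : ℝ) * p.2}))

/-- Either `a_1 ≥ t`, or `a_1 = m` and `a_2 ≥ t / m` for some `m ≤ t`; the harmonic sum over `m`
produces the logarithm. -/
lemma prob_prodSet_le {θ : ℝ} (hθ : θ ∈ Set.Icc (0 : ℝ) 1) {t : ℝ} (ht : Real.exp 1 ≤ t) :
    prob θ (prodSet t) ≤ ENNReal.ofReal (10 * Real.log t / t) := by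
  have ht0 : 0 < t := (Real.exp_pos 1).trans_le ht
  have ht1 : 1 ≤ t := (Real.one_le_exp zero_le_one).trans ht
  have hlog : 1 ≤ Real.log t := (Real.le_log_iff_exp_le ht0).2 ht
  have hsub : prodSet t ⊆ {x | t ≤ (pq x 1 : ℝ)} ∪
      ⋃ m ∈ Finset.Icc 1 ⌊t⌋₊, {x | pq x 1 = m ∧ t / m ≤ pq x 2} := by
    intro x hx
    rw [prodSet, Set.mem_ofPred_eq] at hx
    by_cases h : t ≤ (pq x 1 : ℝ)
    · exact Or.inl h
    · right
      have hpos : 0 < pq x 1 := by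
        rcases Nat.eq_zero_or_pos (pq x 1) with h0 | h0
        · rw [h0] at hx; simp at hx; linarith
        · exact h0
      simp only [Set.mem_iUnion, Finset.mem_Icc]
      refine ⟨pq x 1, ⟨hpos, Nat.le_floor (not_le.1 h).le⟩, rfl, ?_⟩
      rw [div_le_iff₀ (by exact_mod_cast hpos)]; linarith
  have hharm : ∑ m ∈ Finset.Icc 1 ⌊t⌋₊, 4 / ((m : ℝ) * t) ≤ 4 * (1 + Real.log t) / t := by
    have h1 := harmonic_le_one_add_log ⌊t⌋₊
    rw [harmonic_eq_sum_Icc] at h1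
    push_cast at h1
    have h2 : Real.log ⌊t⌋₊ ≤ Real.log t :=
      Real.log_le_log (by exact_mod_cast Nat.floor_pos.2 ht1) (Nat.floor_le ht0.le)
    calc ∑ m ∈ Finset.Icc 1 ⌊t⌋₊, 4 / ((m : ℝ) * t)
        = 4 / t * ∑ m ∈ Finset.Icc 1 ⌊t⌋₊, (m : ℝ)⁻¹ := by
          rw [Finset.mul_sum]
          refine Finset.sum_congr rfl fun m _ => ?_
          rw [div_mul_eq_div_div_swap]; rfl
      _ ≤ 4 / t * (1 + Real.log t) := by gcongr; linarith
      _ = _ := by ring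
  calc prob θ (prodSet t) ≤ prob θ {x | t ≤ (pq x 1 : ℝ)} +
        prob θ (⋃ m ∈ Finset.Icc 1 ⌊t⌋₊, {x | pq x 1 = m ∧ t / m ≤ pq x 2}) :=
      (measure_mono hsub).trans (measure_union_le _ _)
    _ ≤ ENNReal.ofReal (2 / t) + ∑ m ∈ Finset.Icc 1 ⌊t⌋₊, ENNReal.ofReal (4 / (m * t)) := by
      gcongr
      · exact prob_large_le hθ ht0
      · refine (measure_biUnion_finset_le _ _).trans (Finset.sum_le_sum fun m hm => ?_)
        exact prob_eq_large_le hθ (Finset.mem_Icc.1 hm).1 ht0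
    _ = ENNReal.ofReal (2 / t + ∑ m ∈ Finset.Icc 1 ⌊t⌋₊, 4 / (m * t)) := by
      rw [← ENNReal.ofReal_sum_of_nonneg (fun m _ => by positivity),
        ← ENNReal.ofReal_add (by positivity) (Finset.sum_nonneg fun m _ => by positivity)]
    _ ≤ _ := by
      refine ENNReal.ofReal_le_ofReal ?_
      calc _ ≤ 2 / t + 4 * (1 + Real.log t) / t := by gcongr
        _ = (6 + 4 * Real.log t) / t := by ring
        _ ≤ _ := by gcongr; linarith

/-- Either `a_2 ≥ t`, or `a_2 = m` and `a_1, a_3 ≥ t / m` for some `m ≤ t`. Each `m` contributes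
at most `(2 m / t) (4 / (m t)) = 8 / t²`, so there is no logarithmic loss. -/
lemma prob_adjacent_le {θ : ℝ} (hθ : θ ∈ Set.Icc (0 : ℝ) 1) {t : ℝ} (ht : 1 ≤ t) :
    prob θ (prodSet t ∩ gaussMap ⁻¹' prodSet t) ≤ ENNReal.ofReal (10 / t) := by
  have ht0 : 0 < t := by linarith
  have hmB : ∀ m : ℕ, MeasurableSet {x | pq x 1 = m ∧ t / m ≤ pq x 2} := fun m =>
    ((measurable_pq 1).prodMk (measurable_pq 2))
      (MeasurableSet.of_discrete (s := {p : ℕ × ℕ | p.1 = m ∧ t / m ≤ p.2}))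
  have hmL : MeasurableSet {x | t ≤ (pq x 1 : ℝ)} :=
    (measurable_pq 1) (MeasurableSet.of_discrete (s := {j : ℕ | t ≤ (j : ℝ)}))
  have hsub : prodSet t ∩ gaussMap ⁻¹' prodSet t ⊆ gaussMap ⁻¹' {x | t ≤ (pq x 1 : ℝ)} ∪
      ⋃ m ∈ Finset.Icc 1 ⌊t⌋₊, ({x | pq x 1 ∈ {j : ℕ | t / m ≤ (j : ℝ)}} ∩
        gaussMap ⁻¹' {x | pq x 1 = m ∧ t / m ≤ pq x 2}) := by
    rintro x ⟨hx, hy⟩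
    have h12 : pq x 2 = pq (gaussMap x) 1 := pq_gaussMap x 0
    simp only [prodSet, Set.mem_ofPred_eq, Set.mem_preimage, h12] at hx hy
    by_cases h : t ≤ (pq (gaussMap x) 1 : ℝ)
    · exact Or.inl h
    · right
      have hpos : 0 < pq (gaussMap x) 1 := by
        rcases Nat.eq_zero_or_pos (pq (gaussMap x) 1) with h0 | h0
        · rw [h0] at hx; simp at hx; linarith
        · exact h0
      have hpos' : (0 : ℝ) < pq (gaussMap x) 1 := by exact_mod_cast hpos
      simp only [Set.mem_iUnion, Finset.mem_Icc]
      refine ⟨pq (gaussMap x) 1, ⟨hpos, Nat.le_floor (not_le.1 h).le⟩, ?_, rfl, ?_⟩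
      · simp only [Set.mem_ofPred_eq]
        rwa [div_le_iff₀ hpos']
      · rw [div_le_iff₀ hpos']; linarith
  calc _ ≤ prob θ (gaussMap ⁻¹' {x | t ≤ (pq x 1 : ℝ)}) + prob θ (⋃ m ∈ Finset.Icc 1 ⌊t⌋₊,
        ({x | pq x 1 ∈ {j : ℕ | t / m ≤ (j : ℝ)}} ∩
          gaussMap ⁻¹' {x | pq x 1 = m ∧ t / m ≤ pq x 2})) :=
      (measure_mono hsub).trans (measure_union_le _ _)
    _ ≤ ENNReal.ofReal (2 / t) + ∑ m ∈ Finset.Icc 1 ⌊t⌋₊, ENNReal.ofReal (8 / t ^ 2) := by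
      gcongr
      · exact prob_iterate_le hmL (fun θ hθ => prob_large_le hθ ht0) 1 θ hθ
      · refine (measure_biUnion_finset_le _ _).trans (Finset.sum_le_sum fun m hm => ?_)
        have hm1 := (Finset.mem_Icc.1 hm).1
        have hm0 : (0 : ℝ) < m := by exact_mod_cast hm1
        refine (prob_first_le (hmB m) (fun θ hθ => prob_eq_large_le hθ hm1 ht0) _ hθ).trans ?_
        calc _ ≤ ENNReal.ofReal (4 / (m * t)) * ENNReal.ofReal (2 / (t / m)) := by
              gcongr
              exact prob_large_le hθ (by positivity)
          _ = _ := by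
            rw [← ENNReal.ofReal_mul (by positivity)]
            congr 1
            field_simp
            norm_num
    _ = ENNReal.ofReal (2 / t + ⌊t⌋₊ * (8 / t ^ 2)) := by
      rw [← ENNReal.ofReal_sum_of_nonneg (fun m _ => by positivity),
        ← ENNReal.ofReal_add (by positivity) (Finset.sum_nonneg fun m _ => by positivity)]
      simp
    _ ≤ _ := by
      refine ENNReal.ofReal_le_ofReal ?_
      calc 2 / t + ⌊t⌋₊ * (8 / t ^ 2) ≤ 2 / t + t * (8 / t ^ 2) := by
            gcongr; exact Nat.floor_le ht0.le
        _ = 10 / t := by field_simp; norm_num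

/-- The products `a_1 a_2` and `a_{j+3} a_{j+4}` share no digit, so the bounds of
`prob_prodSet_le` multiply. -/
lemma prob_distant_le {θ : ℝ} (hθ : θ ∈ Set.Icc (0 : ℝ) 1) {t : ℝ} (ht : Real.exp 1 ≤ t)
    (j : ℕ) :
    prob θ (prodSet t ∩ gaussMap^[j + 2] ⁻¹' prodSet t) ≤
      ENNReal.ofReal ((10 * Real.log t / t) ^ 2) := by
  have hlog : 0 ≤ 10 * Real.log t / t := by
    have h1 : 1 ≤ t := (Real.one_le_exp zero_le_one).trans ht
    have := Real.log_nonneg h1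
    positivity
  have hb := prob_iterate_le (measurableSet_prodSet t) (fun θ hθ => prob_prodSet_le hθ ht) j
  have h := prob_pair_le ((measurable_gaussMap.iterate j) (measurableSet_prodSet t)) hb
    {p : ℕ × ℕ | t ≤ (p.1 : ℝ) * p.2} hθ
  rw [Function.iterate_add, Set.preimage_comp, sq, ENNReal.ofReal_mul hlog]
  refine h.trans ?_
  gcongr
  exact prob_prodSet_le hθ ht

/-- The set where `a_l a_{l+1} ≥ t` and `a_k a_{k+1} ≥ t` for some `1 ≤ k < l`. -/
def badSet (t : ℝ) (l : ℕ) : Set ℝ :=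
  {x | ∃ k, 1 ≤ k ∧ k < l ∧ t ≤ (pq x k : ℝ) * pq x (k + 1) ∧ t ≤ (pq x l : ℝ) * pq x (l + 1)}

lemma mem_prodSet_iterate (t x : ℝ) (k : ℕ) :
    gaussMap^[k] x ∈ prodSet t ↔ t ≤ (pq x (k + 1) : ℝ) * pq x (k + 1 + 1) := by
  simp only [prodSet, Set.mem_ofPred_eq]
  rw [pq_iterate x k 0, pq_iterate x k 1]

lemma prob_badSet_le {t : ℝ} (ht : Real.exp 1 ≤ t) (l : ℕ) :
    prob 0 (badSet t l) ≤ ENNReal.ofReal (100 * ((t + l * Real.log t ^ 2) / t ^ 2)) := by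
  have h1 : 1 ≤ t := (Real.one_le_exp zero_le_one).trans ht
  have ht0 : 0 < t := by linarith
  have hθ : (0 : ℝ) ∈ Set.Icc (0 : ℝ) 1 := by simp
  have hG := measurableSet_prodSet t
  -- With `i = k - 1`, the first set is the case `k = l - 1` and the union covers `k ≤ l - 2`, where
  -- the shift `l - k` equals `(l - i - 3) + 2`; the truncated differences cause no harm, since the
  -- probability bounds hold for every shift.
  have hsub : badSet t l ⊆ gaussMap^[l - 2] ⁻¹' (prodSet t ∩ gaussMap ⁻¹' prodSet t) ∪
      ⋃ k ∈ Finset.range l,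
        gaussMap^[k] ⁻¹' (prodSet t ∩ gaussMap^[(l - k - 3) + 2] ⁻¹' prodSet t) := by
    rintro x ⟨k, hk1, hkl, ha, hb⟩
    obtain ⟨i, rfl⟩ : ∃ i, k = i + 1 := ⟨k - 1, by omega⟩
    obtain ⟨d, rfl⟩ : ∃ d, l = i + d + 1 + 1 := ⟨l - i - 2, by omega⟩
    rw [← mem_prodSet_iterate] at ha hb
    rcases Nat.eq_zero_or_pos d with rfl | hd
    · left
      refine ⟨by simpa using ha, ?_⟩
      simpa [Function.iterate_succ_apply'] using hb
    · right
      simp only [Set.mem_iUnion, Finset.mem_range]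
      refine ⟨i, by omega, ha, ?_⟩
      rw [Set.mem_preimage, ← Function.iterate_add_apply]
      have e : i + d + 1 + 1 - i - 3 + 2 + i = i + d + 1 := by omega
      rw [e]
      exact hb
  calc prob 0 (badSet t l) ≤ _ := (measure_mono hsub).trans (measure_union_le _ _)
    _ ≤ ENNReal.ofReal (10 / t) +
        ∑ k ∈ Finset.range l, ENNReal.ofReal ((10 * Real.log t / t) ^ 2) := by
      gcongr
      · exact prob_iterate_le (hG.inter (measurable_gaussMap hG))
          (fun θ hθ => prob_adjacent_le hθ h1) _ 0 hθ
      · refine (measure_biUnion_finset_le _ _).trans (Finset.sum_le_sum fun k _ => ?_)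
        exact prob_iterate_le (hG.inter ((measurable_gaussMap.iterate _) hG))
          (fun θ hθ => prob_distant_le hθ ht _) _ 0 hθ
    _ = ENNReal.ofReal (10 / t + l * (10 * Real.log t / t) ^ 2) := by
      rw [← ENNReal.ofReal_sum_of_nonneg (fun m _ => by positivity),
        ← ENNReal.ofReal_add (by positivity) (Finset.sum_nonneg fun m _ => by positivity)]
      simp
    _ ≤ _ := by
      refine ENNReal.ofReal_le_ofReal ?_
      have e : 100 * ((t + l * Real.log t ^ 2) / t ^ 2) =
          100 / t + l * (10 * Real.log t / t) ^ 2 := by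
        field_simp; ring
      rw [e]
      gcongr
      norm_num

/-! ### Reduction to a Borel-Cantelli argument -/

lemma prob_zero : prob 0 = volume.restrict irrUnit := by
  simp [prob, dens]

/-- The general term of the series is at least `1 / φ n`. -/
lemma tendsto_of_summable {φ : ℕ → ℝ} (hpos : ∀ n, 0 < φ n)
    (hconv : Summable fun n : ℕ => (φ n + n * Real.log (φ n) ^ 2) / φ n ^ 2) :
    Tendsto φ atTop atTop := by
  have h : Tendsto (fun n => (φ n)⁻¹) atTop (nhdsWithin 0 (Set.Ioi 0)) := by
    refine tendsto_nhdsWithin_iff.2 ⟨?_, Eventually.of_forall fun n => inv_pos.2 (hpos n)⟩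
    refine squeeze_zero (fun n => (inv_pos.2 (hpos n)).le) (fun n => ?_)
      hconv.tendsto_atTop_zero
    have := hpos n
    rw [le_div_iff₀ (by positivity)]
    have e : (φ n)⁻¹ * φ n ^ 2 = φ n := by field_simp
    rw [e]
    have : 0 ≤ (n : ℝ) * Real.log (φ n) ^ 2 := by positivity
    linarith
  refine h.inv_tendsto_nhdsGT_zero.congr fun n => ?_
  simp

/-- For infinitely many `n` there is a pair `k < l ≤ n`; by monotonicity `φ n` may be replaced by
`φ l`, and `l` is unbounded because `φ → ∞`. -/
lemma F2_subset {φ : ℕ → ℝ} (hmono : Monotone φ) (hlim : Tendsto φ atTop atTop) :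
    F2 φ ⊆ {x | ∃ᶠ l in atTop, x ∈ badSet (φ l) l} := by
  rintro x ⟨-, -, hinf⟩
  rw [Set.mem_ofPred_eq, frequently_atTop]
  intro L
  -- Beyond `N`, the threshold `φ n` exceeds each of the products with index at most `L`.
  obtain ⟨N, hN⟩ := eventually_atTop.1
    (hlim.eventually_gt_atTop (∑ i ∈ Finset.range (L + 1), (pq x i : ℝ) * pq x (i + 1)))
  have key : ∀ n k l, N < n → l ≤ n → k < l → 1 ≤ k → φ n ≤ (pq x k : ℝ) * pq x (k + 1) →
      φ n ≤ (pq x l : ℝ) * pq x (l + 1) → ∃ b ≥ L, x ∈ badSet (φ b) b := by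
    intro n k l hn hln hkl hk ha hb
    refine ⟨l, ?_, k, hk, hkl, (hmono hln).trans ha, (hmono hln).trans hb⟩
    by_contra hlL
    have h1 := Finset.single_le_sum (f := fun i => (pq x i : ℝ) * pq x (i + 1))
      (fun i _ => by positivity) (Finset.mem_range.2 (by omega : l < L + 1))
    have h2 := hN n hn.le
    linarith
  obtain ⟨n, ⟨k, l, hk1, hkn, hl1, hln, hne, ha, hb⟩, hn⟩ := hinf.exists_gt N
  rcases lt_or_gt_of_ne hne with h | h
  · exact key n k l hn hln h hk1 ha hb
  · exact key n l k hn hkn h hl1 hb ha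

end GaussChain

open GaussChain in
theorem F2_measure_zero_of_summable (φ : ℕ → ℝ) (hpos : ∀ n, 0 < φ n)
    (hmono : Monotone φ)
    (hconv : Summable fun n : ℕ => (φ n + n * Real.log (φ n) ^ 2) / φ n ^ 2) :
    volume (F2 φ) = 0 := by
  have hlim := tendsto_of_summable hpos hconv
  obtain ⟨N, hN⟩ := eventually_atTop.1 (hlim.eventually_ge_atTop (Real.exp 1))
  have hsum : ∑' l, prob 0 (badSet (φ (l + N)) (l + N)) ≠ ∞ := by
    refine ne_top_of_le_ne_top ?_ (ENNReal.tsum_le_tsum fun l =>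
      prob_badSet_le (hN (l + N) (Nat.le_add_left N l)) (l + N))
    exact ((summable_nat_add_iff N).2 (hconv.mul_left 100)).tsum_ofReal_ne_top
  have hzero := measure_setOfPred_frequently_eq_zero hsum
  have hsub : F2 φ ⊆ {x | ∃ᶠ l in atTop, x ∈ badSet (φ (l + N)) (l + N)} ∩ irrUnit := by
    intro x hx
    refine ⟨?_, hx.1, hx.2.1⟩
    have h := F2_subset hmono hlim hx
    rw [Set.mem_ofPred_eq, ← map_add_atTop_eq_nat N] at h
    exact h
  refine measure_mono_null hsub ?_
  rwa [prob_zero, Measure.restrict_apply' measurableSet_irrUnit] at hzero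
end

section
/- Let φ: ℕ → (0,∞) be a non-decreasing function. If the series Σ_{n=1}^∞ (φ(n) + n·(log φ(n))²)/φ(n)² diverges, then the set F₂(φ) has full Lebesgue measure in (0,1), i.e. Lebesgue measure 1. -/
/-!
For `s ∈ [0,1]` let `law s` be the probability measure on `(0,1)` with density `(1+s)/(1+sy)²`;
`law 0` is Lebesgue measure. This family is closed under the Gauss map: under `law s` the first
digit equals `a` with probability `(1+s)/((a+s)(a+s+1))`, and conditionally on that the point `T x`
has law `law (1/(a+s))` (`law_branch`, `seqLaw_eq_tsum`). Hence every bound on the probability of an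
event that is uniform in `s` survives conditioning on any finite number of earlier digits
(`seqLaw_inter_le`, `le_seqLaw_inter`), and events living on disjoint blocks of digits whose uniform
lower bounds have divergent sum occur infinitely often almost surely (`ae_infinite_blocks`).

Since `1/φ + n (log φ)²/φ²` is not summable, there are two cases.

* If `∑ 1/φ(n)` diverges, then `P(a_1 ≥ t) ≥ 1/(t+1)` uniformly, so `a_{n+1} ≥ φ(n+1)` infinitely
  often; the two products `a_n a_{n+1}` and `a_{n+1} a_{n+2}` are then both large.
* If it converges, then `φ → ∞` and `∑ n (log φ(n)/φ(n))²` diverges. Uniformly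
  `P(a_1 a_2 ≥ t) ≥ log t/(12 t)` (`le_seqLaw_pairGe`), so `M` disjoint pairs of digits contain one
  with product at least `t` with probability at least `1 - exp(-M log t/(12 t))`, and two successive
  groups of `M` pairs both do so with probability at least the square of this
  (`le_seqLaw_twoPairs`). With dyadic blocks, `M = 2^j` and `t = φ(2^(j+3))`, the sum of these
  squares diverges by condensation, as `log x / x` decreases for `x ≥ e`.
-/

open scoped ENNReal
open MeasureTheory Filter

namespace GaussProduct

/-! ### A family of laws closed under the Gauss map -/

/-- The irrational points of `(0,1)`. The Gauss map sends this set to itself, and every partial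
quotient of its points is at least `1`. -/
def unitIrr : Set ℝ := {x | x ∈ Set.Ioo (0 : ℝ) 1 ∧ Irrational x}

/-- The probability density `(1+s)/(1+sy)²` on `(0,1)`. For `s = q_{n-1}/q_n` it is the law of
`Tⁿ x` conditioned on the first `n` partial quotients. -/
noncomputable def dens (s y : ℝ) : ℝ := (1 + s) / (1 + s * y) ^ 2

/-- The probability measure on `(0,1)` with density `dens s`, carried by the irrational points. -/
noncomputable def law (s : ℝ) : Measure ℝ :=
  (volume.restrict unitIrr).withDensity fun y => ENNReal.ofReal (dens s y)

/-- The sequence of partial quotients, indexed from `0`: `digits x i = a_{i+1}(x)`. -/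
noncomputable def digits (x : ℝ) : ℕ → ℕ := fun i => pq x (i + 1)

/-- The distribution of the partial quotients under `law s`. -/
noncomputable def seqLaw (s : ℝ) : Measure (ℕ → ℕ) := (law s).map digits

/-- Prepend a digit to a sequence. -/
def cons (a : ℕ) (d : ℕ → ℕ) : ℕ → ℕ
  | 0 => a
  | n + 1 => d n

/-- Drop the first `m` digits of a sequence. -/
def shift (m : ℕ) (d : ℕ → ℕ) : ℕ → ℕ := fun i => d (i + m)

/-- The probability of the first digit `b + 1` under `law s`. -/
noncomputable def weight (s : ℝ) (b : ℕ) : ℝ := (1 + s) / ((b + 1 + s) * (b + 2 + s))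

/-- The parameter of the law of `T x` after the first digit `b + 1`. -/
noncomputable def next (s : ℝ) (b : ℕ) : ℝ := 1 / (b + 1 + s)

lemma next_mem {s : ℝ} (hs : s ∈ Set.Icc (0 : ℝ) 1) (b : ℕ) : next s b ∈ Set.Icc (0 : ℝ) 1 := by
  have h0 := hs.1
  have hb : (0 : ℝ) ≤ b := b.cast_nonneg
  refine ⟨by unfold next; positivity, ?_⟩
  unfold next
  rw [div_le_one (by positivity)]
  linarith

lemma measurableSet_unitIrr : MeasurableSet unitIrr := by
  have h : MeasurableSet {x : ℝ | Irrational x} :=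
    (Set.countable_range ((↑) : ℚ → ℝ)).measurableSet.compl
  exact measurableSet_Ioo.inter h

lemma measurable_gaussMap : Measurable gaussMap := by
  unfold gaussMap
  fun_prop

lemma measurable_digits : Measurable digits := by
  refine measurable_pi_lambda _ fun i => ?_
  unfold digits pq
  have h := measurable_gaussMap.iterate (i + 1 - 1)
  exact (measurable_const.div h).nat_floor

lemma measurable_cons (a : ℕ) : Measurable (cons a) := by
  refine measurable_pi_lambda _ fun i => ?_
  cases i with
  | zero => exact measurable_const
  | succ n => exact measurable_pi_apply n

lemma measurable_shift (m : ℕ) : Measurable (shift m) :=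
  measurable_pi_lambda _ fun i => measurable_pi_apply (i + m)

lemma measurable_dens (s : ℝ) : Measurable (dens s) := by
  unfold dens
  fun_prop

lemma ae_unitIrr_Ioo : unitIrr =ᵐ[volume] Set.Ioo (0 : ℝ) 1 := by
  have h : ∀ᵐ x : ℝ, Irrational x :=
    measure_eq_zero_iff_ae_notMem.1 ((Set.countable_range ((↑) : ℚ → ℝ)).measure_zero volume)
  filter_upwards [h] with x hx
  exact propext ⟨fun h => h.1, fun h => ⟨h, hx⟩⟩

/-- The distribution function of `law s`, from the primitive `(1+s)y/(1+sy)` of its density. -/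
lemma law_Ioo {s : ℝ} (hs : s ∈ Set.Icc (0 : ℝ) 1) {c : ℝ} (h0 : 0 < c) (h1 : c ≤ 1) :
    law s (Set.Ioo 0 c) = ENNReal.ofReal ((1 + s) * c / (1 + s * c)) := by
  have hs0 := hs.1
  have hpos : ∀ y ∈ Set.uIcc 0 c, 0 < 1 + s * y := by
    intro y hy
    rw [Set.uIcc_of_le h0.le] at hy
    have := mul_nonneg hs0 hy.1
    linarith
  have hcont : ContinuousOn (dens s) (Set.uIcc 0 c) := by
    unfold dens
    refine ContinuousOn.div (by fun_prop) (by fun_prop) fun y hy => ?_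
    exact (pow_pos (hpos y hy) 2).ne'
  have hii : IntervalIntegrable (dens s) volume 0 c := hcont.intervalIntegrable
  have hFTC : ∫ y in (0 : ℝ)..c, dens s y = (1 + s) * c / (1 + s * c) := by
    rw [intervalIntegral.integral_eq_sub_of_hasDerivAt
      (f := fun y => (1 + s) * y / (1 + s * y)) (f' := dens s) _ hii]
    · simp
    · intro y hy
      have hy' := (hpos y hy).ne'
      have hn : HasDerivAt (fun y : ℝ => (1 + s) * y) (1 + s) y := by
        simpa using (hasDerivAt_id y).const_mul (1 + s)
      have hd : HasDerivAt (fun y : ℝ => 1 + s * y) s y := by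
        simpa using ((hasDerivAt_id y).const_mul s).const_add 1
      have heq : dens s y = ((1 + s) * (1 + s * y) - (1 + s) * y * s) / (1 + s * y) ^ 2 := by
        unfold dens
        congr 1
        ring
      rw [heq]
      exact hn.div hd hy'
  unfold law
  rw [withDensity_apply _ measurableSet_Ioo, Measure.restrict_restrict measurableSet_Ioo,
    setLIntegral_congr ((ae_eq_refl _).inter ae_unitIrr_Ioo),
    Set.inter_eq_left.2 (Set.Ioo_subset_Ioo_right h1), setLIntegral_congr Ioo_ae_eq_Ioc,
    ← ofReal_integral_eq_lintegral_ofReal, ← intervalIntegral.integral_of_le h0.le, hFTC]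
  · exact (intervalIntegrable_iff_integrableOn_Ioc_of_le h0.le).1 hii
  · refine Eventually.of_forall fun y => ?_
    simp only [dens, Pi.zero_apply]
    positivity

lemma law_compl_unitIrr (s : ℝ) : law s unitIrrᶜ = 0 := by
  unfold law
  refine withDensity_absolutelyContinuous _ _ ?_
  rw [Measure.restrict_apply measurableSet_unitIrr.compl]
  simp

lemma law_univ {s : ℝ} (hs : s ∈ Set.Icc (0 : ℝ) 1) : law s Set.univ = 1 := by
  have h1 := law_Ioo hs one_pos le_rfl
  have hs0 := hs.1
  have h2 : (1 + s) * 1 / (1 + s * 1) = 1 := by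
    rw [mul_one, mul_one, div_self (by positivity)]
  rw [h2, ENNReal.ofReal_one] at h1
  refine le_antisymm ?_ (h1 ▸ measure_mono (Set.subset_univ _))
  calc law s Set.univ ≤ law s (Set.Ioo 0 1 ∪ unitIrrᶜ) := by
        refine measure_mono fun x _ => ?_
        by_cases hx : x ∈ unitIrr
        · exact Or.inl hx.1
        · exact Or.inr hx
    _ ≤ law s (Set.Ioo 0 1) + law s unitIrrᶜ := measure_union_le _ _
    _ = 1 := by rw [h1, law_compl_unitIrr, add_zero]

lemma seqLaw_univ {s : ℝ} (hs : s ∈ Set.Icc (0 : ℝ) 1) : seqLaw s Set.univ = 1 := by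
  unfold seqLaw
  rw [Measure.map_apply measurable_digits MeasurableSet.univ, Set.preimage_univ, law_univ hs]

lemma digits_eq_cons (x : ℝ) : digits x = cons ⌊1 / x⌋₊ (digits (gaussMap x)) := by
  funext i
  cases i with
  | zero => simp [digits, pq, cons]
  | succ n => simp [digits, pq, cons]

lemma gaussMap_mem {x : ℝ} (hx : x ∈ unitIrr) : gaussMap x ∈ unitIrr := by
  have hfr : gaussMap x = Int.fract (1 / x) := rfl
  have hI : Irrational (gaussMap x) := by
    unfold gaussMap
    rw [one_div]
    exact (irrational_inv_iff.2 hx.2).sub_intCast _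
  refine ⟨⟨?_, hfr ▸ Int.fract_lt_one _⟩, hI⟩
  exact lt_of_le_of_ne (hfr ▸ Int.fract_nonneg _) hI.ne_zero.symm

lemma one_le_digits (i : ℕ) : ∀ {x : ℝ}, x ∈ unitIrr → 1 ≤ digits x i := by
  induction i with
  | zero =>
    intro x hx
    rw [digits_eq_cons]
    change 1 ≤ ⌊1 / x⌋₊
    rw [Nat.one_le_floor_iff, one_le_div hx.1.1]
    exact hx.1.2.le
  | succ i ih =>
    intro x hx
    rw [digits_eq_cons]
    exact ih (gaussMap_mem hx)

/-- The inverse branch `y ↦ 1/(b+1+y)` of the Gauss map maps `E ∩ unitIrr` onto the points of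
`unitIrr` with first digit `b + 1` and image in `E`. -/
lemma image_branch (b : ℕ) (E : Set ℝ) :
    (fun y : ℝ => 1 / (b + 1 + y)) '' (E ∩ unitIrr) =
      {x | x ∈ unitIrr ∧ ⌊1 / x⌋₊ = b + 1 ∧ gaussMap x ∈ E} := by
  have hb : (0 : ℝ) ≤ b := b.cast_nonneg
  ext x
  constructor
  · rintro ⟨y, ⟨hyE, ⟨hy0, hy1⟩, hyI⟩, rfl⟩
    have hinv : 1 / (1 / ((b : ℝ) + 1 + y)) = b + 1 + y := one_div_one_div _
    have hfl : ⌊(b : ℝ) + 1 + y⌋ = (b : ℤ) + 1 := by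
      rw [Int.floor_eq_iff]
      push_cast
      constructor <;> linarith
    refine ⟨⟨⟨by positivity, ?_⟩, ?_⟩, ?_, ?_⟩
    · rw [div_lt_one (by positivity)]
      linarith
    · have h : Irrational ((b : ℝ) + 1 + y) := by
        have := hyI.natCast_add (b + 1)
        push_cast at this
        exact this
      simp only [one_div]
      exact irrational_inv_iff.2 h
    · rw [hinv, Nat.floor_eq_iff (by positivity)]
      push_cast
      constructor <;> linarith
    · have h : gaussMap (1 / ((b : ℝ) + 1 + y)) = y := by
        unfold gaussMap
        rw [hinv, hfl]
        push_cast
        ring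
      change gaussMap (1 / ((b : ℝ) + 1 + y)) ∈ E
      rwa [h]
  · rintro ⟨hx, hfl, hE⟩
    have hx0 := hx.1.1
    have hp : 0 < 1 / x := by positivity
    have hg : gaussMap x = 1 / x - (b + 1) := by
      unfold gaussMap
      rw [← Int.natCast_floor_eq_floor hp.le, hfl]
      push_cast
      rfl
    refine ⟨gaussMap x, ⟨hE, gaussMap_mem hx⟩, ?_⟩
    simp only [hg]
    field_simp
    ring

/-- Conditioning `law s` on the first digit `b + 1` and applying the Gauss map
gives `law (next s b)`. -/
lemma law_branch {s : ℝ} (hs : s ∈ Set.Icc (0 : ℝ) 1) (b : ℕ) {E : Set ℝ} (hE : MeasurableSet E) :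
    law s {x | x ∈ unitIrr ∧ ⌊1 / x⌋₊ = b + 1 ∧ gaussMap x ∈ E} =
      ENNReal.ofReal (weight s b) * law (next s b) E := by
  have hb : (0 : ℝ) ≤ b := b.cast_nonneg
  have hs0 := hs.1
  have hA : MeasurableSet {x | x ∈ unitIrr ∧ ⌊1 / x⌋₊ = b + 1 ∧ gaussMap x ∈ E} := by
    refine measurableSet_unitIrr.inter (MeasurableSet.inter ?_ (measurable_gaussMap hE))
    exact (measurable_const.div measurable_id).nat_floor (measurableSet_singleton (b + 1))
  have hEI : MeasurableSet (E ∩ unitIrr) := hE.inter measurableSet_unitIrr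
  unfold law
  rw [withDensity_apply _ hA, withDensity_apply _ hE, Measure.restrict_restrict hA,
    Measure.restrict_restrict hE, Set.inter_eq_left.2 (fun x hx => hx.1), ← image_branch b E,
    lintegral_image_eq_lintegral_abs_deriv_mul (f' := fun y => -1 / (b + 1 + y) ^ 2) hEI,
    ← lintegral_const_mul _ (measurable_dens _).ennreal_ofReal]
  · refine setLIntegral_congr_fun hEI fun y hy => ?_
    have hy0 := hy.2.1.1
    have hw : 0 ≤ weight s b := by unfold weight; positivity
    rw [← ENNReal.ofReal_mul (abs_nonneg _), ← ENNReal.ofReal_mul hw]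
    congr 1
    rw [neg_div, abs_neg, abs_of_pos (by positivity)]
    unfold dens weight next
    field_simp
    ring
  · intro y hy
    have hy0 := hy.2.1.1
    have hd : HasDerivAt (fun y : ℝ => (b : ℝ) + 1 + y) 1 y :=
      (hasDerivAt_id y).const_add ((b : ℝ) + 1)
    have := hd.inv (by positivity)
    simp only [one_div]
    exact this.hasDerivWithinAt
  · intro y hy z hz h
    have hy0 := hy.2.1.1
    have hz0 := hz.2.1.1
    simp only [one_div, inv_inj] at h
    linarith

/-- The Markov property: the first digit is `b + 1` with probability `weight s b`, and the
remaining digits then have law `seqLaw (next s b)`. -/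
lemma seqLaw_eq_tsum {s : ℝ} (hs : s ∈ Set.Icc (0 : ℝ) 1) {E : Set (ℕ → ℕ)}
    (hE : MeasurableSet E) :
    seqLaw s E =
      ∑' b : ℕ, ENNReal.ofReal (weight s b) * seqLaw (next s b) (cons (b + 1) ⁻¹' E) := by
  have hC : ∀ b : ℕ, MeasurableSet (cons (b + 1) ⁻¹' E) := fun b => measurable_cons _ hE
  unfold seqLaw
  rw [Measure.map_apply measurable_digits hE]
  have hae : law s (digits ⁻¹' E) = law s (digits ⁻¹' E ∩ unitIrr) := by
    refine le_antisymm ?_ (measure_mono Set.inter_subset_left)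
    calc law s (digits ⁻¹' E) ≤ law s ((digits ⁻¹' E ∩ unitIrr) ∪ unitIrrᶜ) := by
          refine measure_mono fun x hx => ?_
          by_cases h : x ∈ unitIrr
          · exact Or.inl ⟨hx, h⟩
          · exact Or.inr h
      _ ≤ _ := measure_union_le _ _
      _ = _ := by rw [law_compl_unitIrr, add_zero]
  have hU : digits ⁻¹' E ∩ unitIrr = ⋃ b : ℕ, {x | x ∈ unitIrr ∧ ⌊1 / x⌋₊ = b + 1 ∧
      gaussMap x ∈ digits ⁻¹' (cons (b + 1) ⁻¹' E)} := by
    ext x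
    simp only [Set.mem_inter_iff, Set.mem_preimage, Set.mem_iUnion, Set.mem_ofPred_eq]
    constructor
    · rintro ⟨hx, hI⟩
      have h1 : 1 ≤ ⌊1 / x⌋₊ := by
        rw [Nat.one_le_floor_iff, one_le_div hI.1.1]
        exact hI.1.2.le
      refine ⟨⌊1 / x⌋₊ - 1, hI, by omega, ?_⟩
      rwa [Nat.sub_add_cancel h1, ← digits_eq_cons]
    · rintro ⟨b, hI, hf, hx⟩
      refine ⟨?_, hI⟩
      rwa [digits_eq_cons, hf]
  rw [hae, hU, measure_iUnion]
  · refine tsum_congr fun b => ?_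
    rw [law_branch hs b (measurable_digits (hC b)), Measure.map_apply measurable_digits (hC b)]
  · intro b c hbc
    refine Set.disjoint_left.2 fun x hx hx' => hbc ?_
    have h1 := hx.2.1
    have h2 := hx'.2.1
    omega
  · intro b
    refine measurableSet_unitIrr.inter (MeasurableSet.inter ?_
      (measurable_gaussMap (measurable_digits (hC b))))
    exact (measurable_const.div measurable_id).nat_floor (measurableSet_singleton (b + 1))

/-- A uniform lower bound for the tail of the first digit. -/
lemma seqLaw_first_ge {s : ℝ} (hs : s ∈ Set.Icc (0 : ℝ) 1) {t : ℝ} (ht : 0 < t) :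
    ENNReal.ofReal (1 / (t + 1)) ≤ seqLaw s {d | t ≤ (d 0 : ℝ)} := by
  have hs0 := hs.1
  have hmeas : MeasurableSet {d : ℕ → ℕ | t ≤ (d 0 : ℝ)} :=
    measurableSet_le measurable_const (measurable_from_top.comp (measurable_pi_apply 0))
  unfold seqLaw
  rw [Measure.map_apply measurable_digits hmeas]
  have hc0 : 0 < 1 / (t + 1) := by positivity
  have hc1 : 1 / (t + 1) ≤ 1 := by
    rw [div_le_one (by positivity)]
    linarith
  calc ENNReal.ofReal (1 / (t + 1))
      ≤ ENNReal.ofReal ((1 + s) * (1 / (t + 1)) / (1 + s * (1 / (t + 1)))) := by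
        apply ENNReal.ofReal_le_ofReal
        rw [le_div_iff₀ (by positivity), mul_comm]
        gcongr
        exact mul_le_of_le_one_right hs0 hc1
    _ = law s (Set.Ioo 0 (1 / (t + 1))) := (law_Ioo hs hc0 hc1).symm
    _ ≤ _ := by
        refine measure_mono fun x hx => ?_
        have hx' : t + 1 < 1 / x := by
          rw [lt_div_iff₀ hx.1]
          have := hx.2
          rw [lt_div_iff₀ (by positivity)] at this
          linarith
        have := Nat.lt_floor_add_one (1 / x)
        simp only [Set.mem_preimage, Set.mem_ofPred_eq, digits, pq]
        simp only [zero_add, Nat.sub_self, Function.iterate_zero, id_eq]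
        linarith

/-! ### Independent blocks up to uniform bounds -/

/-- Membership in `A` is decided by the first `m` digits. -/
def DecidedBy (m : ℕ) (A : Set (ℕ → ℕ)) : Prop :=
  ∀ d d' : ℕ → ℕ, (∀ i < m, d i = d' i) → d ∈ A → d' ∈ A

lemma DecidedBy.mono {m m' : ℕ} {A : Set (ℕ → ℕ)} (h : DecidedBy m A) (hm : m ≤ m') :
    DecidedBy m' A :=
  fun d d' hd => h d d' fun i hi => hd i (hi.trans_le hm)

lemma DecidedBy.compl {m : ℕ} {A : Set (ℕ → ℕ)} (h : DecidedBy m A) : DecidedBy m Aᶜ :=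
  fun d d' hd hA hA' => hA (h d' d (fun i hi => (hd i hi).symm) hA')

lemma DecidedBy.inter {m : ℕ} {A B : Set (ℕ → ℕ)} (hA : DecidedBy m A) (hB : DecidedBy m B) :
    DecidedBy m (A ∩ B) :=
  fun d d' hd h => ⟨hA d d' hd h.1, hB d d' hd h.2⟩

lemma DecidedBy.shift {m : ℕ} {A : Set (ℕ → ℕ)} (h : DecidedBy m A) (o : ℕ) :
    DecidedBy (o + m) (shift o ⁻¹' A) :=
  fun d d' hd => h _ _ fun i hi => hd (i + o) (by omega)

lemma DecidedBy.cons {m : ℕ} {A : Set (ℕ → ℕ)} (h : DecidedBy (m + 1) A) (a : ℕ) :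
    DecidedBy m (cons a ⁻¹' A) := by
  refine fun d d' hd => h _ _ fun i hi => ?_
  cases i with
  | zero => rfl
  | succ n => exact hd n (by omega)

lemma DecidedBy.zero {A : Set (ℕ → ℕ)} (h : DecidedBy 0 A) : A = ∅ ∨ A = Set.univ := by
  rcases A.eq_empty_or_nonempty with hA | ⟨d, hd⟩
  · exact Or.inl hA
  · exact Or.inr (Set.eq_univ_of_forall fun d' => h d d' (by simp) hd)

lemma shift_zero_preimage (B : Set (ℕ → ℕ)) : shift 0 ⁻¹' B = B := rfl

lemma cons_preimage_inter_shift (a m : ℕ) (A B : Set (ℕ → ℕ)) :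
    cons a ⁻¹' (A ∩ shift (m + 1) ⁻¹' B) = cons a ⁻¹' A ∩ shift m ⁻¹' B := rfl

/-- Whatever the first `m` digits are, an event for the remaining ones keeps any upper bound that
holds uniformly in the parameter. -/
lemma seqLaw_inter_le {B : Set (ℕ → ℕ)} (hB : MeasurableSet B) {β : ℝ≥0∞}
    (hβ : ∀ s ∈ Set.Icc (0 : ℝ) 1, seqLaw s B ≤ β) (m : ℕ) :
    ∀ A : Set (ℕ → ℕ), MeasurableSet A → DecidedBy m A → ∀ s ∈ Set.Icc (0 : ℝ) 1,
      seqLaw s (A ∩ shift m ⁻¹' B) ≤ seqLaw s A * β := by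
  induction m with
  | zero =>
    intro A _ hd s hs
    rcases hd.zero with rfl | rfl
    · simp
    · rw [shift_zero_preimage, Set.univ_inter, seqLaw_univ hs, one_mul]
      exact hβ s hs
  | succ m ih =>
    intro A hA hd s hs
    rw [seqLaw_eq_tsum hs (hA.inter (measurable_shift _ hB)), seqLaw_eq_tsum hs hA,
      ← ENNReal.tsum_mul_right]
    refine ENNReal.tsum_le_tsum fun b => ?_
    rw [cons_preimage_inter_shift, mul_assoc]
    gcongr
    exact ih _ (measurable_cons _ hA) (hd.cons _) _ (next_mem hs b)

/-- The counterpart of `seqLaw_inter_le` for lower bounds. -/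
lemma le_seqLaw_inter {B : Set (ℕ → ℕ)} (hB : MeasurableSet B) {β : ℝ≥0∞}
    (hβ : ∀ s ∈ Set.Icc (0 : ℝ) 1, β ≤ seqLaw s B) (m : ℕ) :
    ∀ A : Set (ℕ → ℕ), MeasurableSet A → DecidedBy m A → ∀ s ∈ Set.Icc (0 : ℝ) 1,
      seqLaw s A * β ≤ seqLaw s (A ∩ shift m ⁻¹' B) := by
  induction m with
  | zero =>
    intro A _ hd s hs
    rcases hd.zero with rfl | rfl
    · simp
    · rw [shift_zero_preimage, Set.univ_inter, seqLaw_univ hs, one_mul]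
      exact hβ s hs
  | succ m ih =>
    intro A hA hd s hs
    rw [seqLaw_eq_tsum hs (hA.inter (measurable_shift _ hB)), seqLaw_eq_tsum hs hA,
      ← ENNReal.tsum_mul_right]
    refine ENNReal.tsum_le_tsum fun b => ?_
    rw [cons_preimage_inter_shift, mul_assoc]
    gcongr
    exact ih _ (measurable_cons _ hA) (hd.cons _) _ (next_mem hs b)

/-- The first index of the `j`-th of consecutive blocks of lengths `L 0, L 1, …`. -/
def start (L : ℕ → ℕ) (j : ℕ) : ℕ := ∑ i ∈ Finset.range j, L i

lemma start_succ (L : ℕ → ℕ) (j : ℕ) : start L (j + 1) = start L j + L j :=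
  Finset.sum_range_succ _ _

lemma start_mono (L : ℕ → ℕ) : Monotone (start L) :=
  monotone_nat_of_le_succ fun j => by rw [start_succ]; omega

/-- The sequences none of whose blocks `J ≤ j < k` satisfies its condition `Q j`. -/
def avoid (L : ℕ → ℕ) (Q : ℕ → Set (ℕ → ℕ)) (J k : ℕ) : Set (ℕ → ℕ) :=
  {d | ∀ j, J ≤ j → j < k → shift (start L j) d ∉ Q j}

lemma avoid_succ (L : ℕ → ℕ) (Q : ℕ → Set (ℕ → ℕ)) {J k : ℕ} (h : J ≤ k) :
    avoid L Q J (k + 1) = avoid L Q J k ∩ shift (start L k) ⁻¹' (Q k)ᶜ := by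
  ext d
  constructor
  · intro hd
    exact ⟨fun j h1 h2 => hd j h1 (h2.trans k.lt_succ_self), hd k h k.lt_succ_self⟩
  · rintro ⟨h1, h2⟩ j hj hjk
    rcases (Nat.lt_succ_iff.1 hjk).lt_or_eq with h3 | rfl
    · exact h1 j hj h3
    · exact h2

lemma measurableSet_avoid (L : ℕ → ℕ) {Q : ℕ → Set (ℕ → ℕ)} (hQ : ∀ j, MeasurableSet (Q j))
    (J k : ℕ) : MeasurableSet (avoid L Q J k) := by
  have : avoid L Q J k =
      ⋂ j : ℕ, ⋂ _ : J ≤ j, ⋂ _ : j < k, shift (start L j) ⁻¹' (Q j)ᶜ := by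
    ext d
    simp [avoid]
  rw [this]
  exact MeasurableSet.iInter fun j => MeasurableSet.iInter fun _ => MeasurableSet.iInter fun _ =>
    measurable_shift _ (hQ j).compl

lemma decidedBy_avoid {L : ℕ → ℕ} {Q : ℕ → Set (ℕ → ℕ)} (hd : ∀ j, DecidedBy (L j) (Q j))
    (J k : ℕ) : DecidedBy (start L k) (avoid L Q J k) := by
  intro d d' h hA j hj hjk
  have h1 : start L j + L j ≤ start L k := by
    rw [← start_succ]
    exact start_mono L hjk
  exact ((hd j).compl.shift (start L j)).mono h1 d d' h (hA j hj hjk)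

lemma seqLaw_avoid_le {L : ℕ → ℕ} {Q : ℕ → Set (ℕ → ℕ)} (hQ : ∀ j, MeasurableSet (Q j))
    (hd : ∀ j, DecidedBy (L j) (Q j)) {q : ℕ → ℝ}
    (hq : ∀ j, ∀ s ∈ Set.Icc (0 : ℝ) 1, seqLaw s (Q j)ᶜ ≤ ENNReal.ofReal (Real.exp (-q j)))
    {s : ℝ} (hs : s ∈ Set.Icc (0 : ℝ) 1) {J k : ℕ} (hJ : J ≤ k) :
    seqLaw s (avoid L Q J k) ≤ ENNReal.ofReal (Real.exp (-∑ j ∈ Finset.Ico J k, q j)) := by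
  induction k, hJ using Nat.le_induction with
  | base =>
    simp only [Finset.Ico_self, Finset.sum_empty, neg_zero, Real.exp_zero, ENNReal.ofReal_one]
    exact (measure_mono (Set.subset_univ _)).trans (seqLaw_univ hs).le
  | succ k hk ih =>
    rw [avoid_succ L Q hk, Finset.sum_Ico_succ_top hk, neg_add, Real.exp_add,
      ENNReal.ofReal_mul (Real.exp_pos _).le]
    refine (seqLaw_inter_le (hQ k).compl (hq k) _ _ (measurableSet_avoid L hQ J k)
      (decidedBy_avoid hd J k) s hs).trans ?_
    gcongr

/-- A Borel–Cantelli lemma: block conditions with uniform probabilities of divergent sum occur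
infinitely often almost surely. -/
lemma ae_infinite_blocks {L : ℕ → ℕ} {Q : ℕ → Set (ℕ → ℕ)} (hQ : ∀ j, MeasurableSet (Q j))
    (hd : ∀ j, DecidedBy (L j) (Q j)) {q : ℕ → ℝ} (hq0 : ∀ j, 0 ≤ q j) (hdiv : ¬ Summable q)
    (hq : ∀ j, ∀ s ∈ Set.Icc (0 : ℝ) 1, seqLaw s (Q j)ᶜ ≤ ENNReal.ofReal (Real.exp (-q j)))
    {s : ℝ} (hs : s ∈ Set.Icc (0 : ℝ) 1) :
    ∀ᵐ d ∂(seqLaw s), {j | shift (start L j) d ∈ Q j}.Infinite := by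
  have hnull : ∀ J : ℕ, ∀ᵐ d ∂(seqLaw s), ∃ j, J ≤ j ∧ shift (start L j) d ∈ Q j := by
    intro J
    have hlim : Tendsto (fun k => ENNReal.ofReal (Real.exp (-∑ j ∈ Finset.Ico J k, q j))) atTop
        (nhds 0) := by
      have h1 : Tendsto (fun k => ∑ j ∈ Finset.Ico J k, q j) atTop atTop := by
        have h2 := (not_summable_iff_tendsto_nat_atTop_of_nonneg hq0).1 hdiv
        have h3 := tendsto_atTop_add_const_right atTop (-∑ j ∈ Finset.range J, q j) h2
        refine h3.congr' ?_
        filter_upwards [eventually_ge_atTop J] with k hk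
        rw [Finset.sum_Ico_eq_sub _ hk, sub_eq_add_neg]
      have h4 := Real.tendsto_exp_neg_atTop_nhds_zero.comp h1
      have h5 := (ENNReal.continuous_ofReal.tendsto 0).comp h4
      rw [ENNReal.ofReal_zero] at h5
      exact h5
    have hz : seqLaw s {d | ∀ j, J ≤ j → shift (start L j) d ∉ Q j} = 0 := by
      refine le_antisymm (ge_of_tendsto hlim ?_) zero_le
      filter_upwards [eventually_ge_atTop J] with k hk
      refine (measure_mono ?_).trans (seqLaw_avoid_le hQ hd hq hs hk)
      exact fun d hd j hj _ => hd j hj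
    rw [ae_iff]
    convert hz using 3
    simp
  filter_upwards [ae_all_iff.2 hnull] with d hd
  refine Set.infinite_of_not_bddAbove ?_
  rintro ⟨N, hN⟩
  obtain ⟨j, hj, hjQ⟩ := hd (N + 1)
  have := hN hjQ
  omega

lemma seqLaw_compl_le {Q : Set (ℕ → ℕ)} (hQ : MeasurableSet Q) {r : ℝ} {s : ℝ}
    (hs : s ∈ Set.Icc (0 : ℝ) 1) (h : ENNReal.ofReal r ≤ seqLaw s Q) :
    seqLaw s Qᶜ ≤ ENNReal.ofReal (Real.exp (-r)) := by
  have : IsProbabilityMeasure (seqLaw s) := ⟨seqLaw_univ hs⟩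
  rw [prob_compl_eq_one_sub hQ]
  by_cases hr : 0 ≤ r
  · calc 1 - seqLaw s Q ≤ 1 - ENNReal.ofReal r := tsub_le_tsub_left h 1
      _ = ENNReal.ofReal (1 - r) := by rw [ENNReal.ofReal_sub _ hr, ENNReal.ofReal_one]
      _ ≤ _ := ENNReal.ofReal_le_ofReal (Real.one_sub_le_exp_neg r)
  · refine tsub_le_self.trans ?_
    rw [← ENNReal.ofReal_one]
    exact ENNReal.ofReal_le_ofReal (Real.one_le_exp (by linarith))

/-! ### Products of two consecutive digits -/

/-- The first two digits have product at least `t`. -/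
def pairGe (t : ℝ) : Set (ℕ → ℕ) := {d | t ≤ (d 0 : ℝ) * (d 1 : ℝ)}

lemma measurableSet_pairGe (t : ℝ) : MeasurableSet (pairGe t) :=
  measurableSet_le measurable_const ((measurable_from_top.comp (measurable_pi_apply 0)).mul
    (measurable_from_top.comp (measurable_pi_apply 1)))

lemma decidedBy_pairGe (t : ℝ) : DecidedBy 2 (pairGe t) := by
  intro d d' h hd
  have h0 := h 0 (by norm_num)
  have h1 := h 1 (by norm_num)
  simpa only [pairGe, Set.mem_ofPred_eq, h0, h1] using hd

/-- Summing `P(a_1 = a) P(a_2 ≥ t/a) ≳ a^{-2} · (a/t)` over `a ≤ t` produces the harmonic sum,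
hence the factor `log t`. -/
lemma le_seqLaw_pairGe {t : ℝ} (ht : 1 ≤ t) {s : ℝ} (hs : s ∈ Set.Icc (0 : ℝ) 1) :
    ENNReal.ofReal (Real.log t / (12 * t)) ≤ seqLaw s (pairGe t) := by
  have hs0 := hs.1
  have hs1 := hs.2
  have hterm : ∀ b ∈ Finset.range ⌊t⌋₊, ENNReal.ofReal ((b + 1 : ℝ)⁻¹ * (1 / (12 * t))) ≤
      ENNReal.ofReal (weight s b) * seqLaw (next s b) (cons (b + 1) ⁻¹' pairGe t) := by
    intro b hb
    have hbt : (b : ℝ) + 1 ≤ t := by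
      have h1 : b + 1 ≤ ⌊t⌋₊ := Finset.mem_range.1 hb
      have h2 := (Nat.le_floor_iff (by linarith)).1 h1
      push_cast at h2
      exact h2
    have hb0 : (0 : ℝ) ≤ b := b.cast_nonneg
    have hset : cons (b + 1) ⁻¹' pairGe t = {d | t / (b + 1) ≤ (d 0 : ℝ)} := by
      ext d
      simp only [pairGe, Set.mem_preimage, Set.mem_ofPred_eq, cons]
      rw [div_le_iff₀ (by positivity)]
      push_cast
      rw [mul_comm]
    have hw : 0 ≤ weight s b := by unfold weight; positivity
    have ht1 : 0 < t := by linarith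
    have hw' : 1 / (6 * (b + 1) ^ 2 : ℝ) ≤ weight s b := by
      unfold weight
      rw [div_le_div_iff₀ (by positivity) (by positivity)]
      nlinarith [mul_nonneg hb0 hs0, mul_nonneg hs0 (sub_nonneg.2 hs1), mul_nonneg hb0 hb0,
        mul_nonneg (mul_nonneg hb0 hb0) hs0]
    have hr' : ((b : ℝ) + 1) / (2 * t) ≤ 1 / (t / (b + 1) + 1) := by
      rw [div_le_div_iff₀ (by positivity) (by positivity), mul_add, mul_div_cancel₀ _ (by positivity)]
      linarith
    rw [hset]
    calc ENNReal.ofReal ((b + 1 : ℝ)⁻¹ * (1 / (12 * t)))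
        = ENNReal.ofReal (1 / (6 * (b + 1) ^ 2 : ℝ) * (((b : ℝ) + 1) / (2 * t))) := by
          congr 1
          field_simp
          norm_num
      _ ≤ ENNReal.ofReal (weight s b * (1 / (t / (b + 1) + 1))) := by
          apply ENNReal.ofReal_le_ofReal
          gcongr
      _ = ENNReal.ofReal (weight s b) * ENNReal.ofReal (1 / (t / (b + 1) + 1)) :=
          ENNReal.ofReal_mul hw
      _ ≤ _ := by
          gcongr
          exact seqLaw_first_ge (next_mem hs b) (by positivity)
  have hharm : Real.log t ≤ ∑ b ∈ Finset.range ⌊t⌋₊, (b + 1 : ℝ)⁻¹ := by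
    have h := log_le_harmonic_floor t (by linarith)
    unfold harmonic at h
    push_cast at h
    exact h
  calc ENNReal.ofReal (Real.log t / (12 * t))
      ≤ ENNReal.ofReal (∑ b ∈ Finset.range ⌊t⌋₊, (b + 1 : ℝ)⁻¹ * (1 / (12 * t))) := by
        apply ENNReal.ofReal_le_ofReal
        rw [← Finset.sum_mul, div_eq_mul_one_div]
        gcongr
    _ = ∑ b ∈ Finset.range ⌊t⌋₊, ENNReal.ofReal ((b + 1 : ℝ)⁻¹ * (1 / (12 * t))) :=
        ENNReal.ofReal_sum_of_nonneg fun b _ => by positivity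
    _ ≤ ∑ b ∈ Finset.range ⌊t⌋₊,
          ENNReal.ofReal (weight s b) * seqLaw (next s b) (cons (b + 1) ⁻¹' pairGe t) :=
        Finset.sum_le_sum hterm
    _ ≤ _ := by
        rw [seqLaw_eq_tsum hs (measurableSet_pairGe t)]
        exact ENNReal.sum_le_tsum _

/-- Among the `M` disjoint pairs formed by the first `2 * M` digits, some pair has product at
least `t`. -/
def somePair (t : ℝ) (M : ℕ) : Set (ℕ → ℕ) := (avoid (fun _ => 2) (fun _ => pairGe t) 0 M)ᶜ

lemma start_two (j : ℕ) : start (fun _ => 2) j = 2 * j := by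
  simp [start, mul_comm]

lemma exists_of_mem_somePair {t : ℝ} {M : ℕ} {d : ℕ → ℕ} (h : d ∈ somePair t M) :
    ∃ i < M, t ≤ (d (2 * i) : ℝ) * (d (2 * i + 1) : ℝ) := by
  simp only [somePair, avoid, Set.mem_compl_iff, Set.mem_ofPred_eq] at h
  push Not at h
  obtain ⟨i, -, hi, hd⟩ := h
  refine ⟨i, hi, ?_⟩
  simpa only [pairGe, shift, start_two, Set.mem_ofPred_eq, zero_add, add_comm 1] using hd

lemma measurableSet_somePair (t : ℝ) (M : ℕ) : MeasurableSet (somePair t M) :=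
  (measurableSet_avoid _ (fun _ => measurableSet_pairGe t) 0 M).compl

lemma decidedBy_somePair (t : ℝ) (M : ℕ) : DecidedBy (2 * M) (somePair t M) := by
  have h := (decidedBy_avoid (L := fun _ => 2) (fun _ => decidedBy_pairGe t) 0 M).compl
  rwa [start_two] at h

lemma le_seqLaw_somePair {t : ℝ} (ht : 1 ≤ t) (M : ℕ) {s : ℝ} (hs : s ∈ Set.Icc (0 : ℝ) 1) :
    ENNReal.ofReal (1 - Real.exp (-(M * (Real.log t / (12 * t))))) ≤ seqLaw s (somePair t M) := by
  have : IsProbabilityMeasure (seqLaw s) := ⟨seqLaw_univ hs⟩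
  have h := seqLaw_avoid_le (L := fun _ => 2) (Q := fun _ => pairGe t)
    (q := fun _ => Real.log t / (12 * t)) (fun _ => measurableSet_pairGe t)
    (fun _ => decidedBy_pairGe t)
    (fun _ s hs => seqLaw_compl_le (measurableSet_pairGe t) hs (le_seqLaw_pairGe ht hs))
    hs (Nat.zero_le M)
  simp only [Finset.sum_const, Nat.card_Ico, tsub_zero, nsmul_eq_mul] at h
  unfold somePair
  rw [prob_compl_eq_one_sub (measurableSet_avoid _ (fun _ => measurableSet_pairGe t) 0 M),
    ENNReal.ofReal_sub _ (Real.exp_pos _).le, ENNReal.ofReal_one]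
  exact tsub_le_tsub_left h 1

/-- Both halves of the first `4 * M` digits contain a pair with product at least `t`. -/
def twoPairs (t : ℝ) (M : ℕ) : Set (ℕ → ℕ) := somePair t M ∩ shift (2 * M) ⁻¹' somePair t M

lemma measurableSet_twoPairs (t : ℝ) (M : ℕ) : MeasurableSet (twoPairs t M) :=
  (measurableSet_somePair t M).inter (measurable_shift _ (measurableSet_somePair t M))

lemma decidedBy_twoPairs (t : ℝ) (M : ℕ) : DecidedBy (4 * M) (twoPairs t M) :=
  ((decidedBy_somePair t M).mono (by omega)).inter
    (((decidedBy_somePair t M).shift (2 * M)).mono (by omega))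

lemma le_seqLaw_twoPairs {t : ℝ} (ht : 1 ≤ t) (M : ℕ) {s : ℝ} (hs : s ∈ Set.Icc (0 : ℝ) 1) :
    ENNReal.ofReal ((1 - Real.exp (-(M * (Real.log t / (12 * t))))) ^ 2) ≤
      seqLaw s (twoPairs t M) := by
  have h0 : 0 ≤ 1 - Real.exp (-(M * (Real.log t / (12 * t)))) := by
    have := Real.log_nonneg ht
    rw [sub_nonneg, Real.exp_le_one_iff, neg_nonpos]
    positivity
  rw [sq, ENNReal.ofReal_mul h0]
  refine le_trans ?_ (le_seqLaw_inter (measurableSet_somePair t M)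
    (fun s hs => le_seqLaw_somePair ht M hs) (2 * M) _ (measurableSet_somePair t M)
    (decidedBy_somePair t M) s hs)
  gcongr
  exact le_seqLaw_somePair ht M hs

/-! ### The two sources of divergence -/

/-- If `∑ 1/φ(n)` diverges, then `a_{n+1} ≥ φ(n+1)` infinitely often. -/
lemma ae_infinite_large {φ : ℕ → ℝ} (hpos : ∀ n, 0 < φ n) (hmono : Monotone φ)
    (hdiv : ¬ Summable fun n => 1 / φ n) :
    ∀ᵐ d ∂(seqLaw 0), {n : ℕ | φ (n + 1) ≤ (d n : ℝ)}.Infinite := by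
  have h0 : (0 : ℝ) ∈ Set.Icc (0 : ℝ) 1 := ⟨le_rfl, zero_le_one⟩
  have hmeas : ∀ n, MeasurableSet {d : ℕ → ℕ | φ (n + 1) ≤ (d 0 : ℝ)} := fun n =>
    measurableSet_le measurable_const (measurable_from_top.comp (measurable_pi_apply 0))
  have hq : ¬ Summable fun n => 1 / (φ (n + 1) + 1) := by
    intro h
    refine hdiv ((summable_nat_add_iff 1).1 ?_)
    refine Summable.of_nonneg_of_le (fun n => (one_div_pos.2 (hpos _)).le) (fun n => ?_)
      (h.mul_left (1 + 1 / φ 0))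
    have h1 := hpos 0
    have h2 := hpos (n + 1)
    have h3 : φ 0 ≤ φ (n + 1) := hmono (Nat.zero_le _)
    rw [mul_one_div, div_le_div_iff₀ h2 (by positivity), one_mul, add_mul, one_mul]
    have : 1 ≤ 1 / φ 0 * φ (n + 1) := by
      rw [one_div_mul_eq_div, one_le_div h1]
      exact h3
    linarith
  have h := ae_infinite_blocks (L := fun _ => 1) (Q := fun n => {d | φ (n + 1) ≤ (d 0 : ℝ)}) hmeas
    (fun n d d' hd h => by
      have := hd 0 one_pos
      simpa only [Set.mem_ofPred_eq, this] using h)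
    (fun n => by have := hpos (n + 1); positivity) hq
    (fun n s hs => seqLaw_compl_le (hmeas n) hs (seqLaw_first_ge hs (hpos (n + 1)))) h0
  filter_upwards [h] with d hd
  simpa [start, shift] using hd

/-- A condensation estimate: if `g ≥ 0` is antitone, then `∑ n g(n)²` converges as soon as
`∑ (2^j g(2^(j+3)))²` does. -/
lemma summable_of_dyadic {g : ℕ → ℝ} (hg0 : ∀ n, 0 ≤ g n) (hg : Antitone g)
    (h : Summable fun j : ℕ => ((2 : ℝ) ^ j * g (2 ^ (j + 3))) ^ 2) :
    Summable fun n : ℕ => (n : ℝ) * g n ^ 2 := by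
  have hh : Summable fun j : ℕ => ((2 : ℝ) ^ j * g (2 ^ j)) ^ 2 := by
    refine (summable_nat_add_iff 3).1 ((h.mul_left 64).congr fun j => ?_)
    rw [pow_add (2 : ℝ) j 3]
    ring
  have hK : ∀ K : ℕ, ∑ n ∈ Finset.range (2 ^ K), (n : ℝ) * g n ^ 2 ≤
      ∑ j ∈ Finset.range K, 2 * ((2 : ℝ) ^ j * g (2 ^ j)) ^ 2 := by
    intro K
    induction K with
    | zero => simp
    | succ K ih =>
      have hle : 2 ^ K ≤ 2 ^ (K + 1) := Nat.pow_le_pow_right two_pos K.le_succ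
      rw [Finset.sum_range_succ, ← Finset.sum_range_add_sum_Ico _ hle]
      refine add_le_add ih ?_
      calc ∑ n ∈ Finset.Ico (2 ^ K) (2 ^ (K + 1)), ((n : ℕ) : ℝ) * g n ^ 2
          ≤ ∑ _n ∈ Finset.Ico (2 ^ K) (2 ^ (K + 1)), (2 : ℝ) ^ (K + 1) * g (2 ^ K) ^ 2 := by
            refine Finset.sum_le_sum fun n hn => ?_
            rw [Finset.mem_Ico] at hn
            have h1 : (n : ℝ) ≤ 2 ^ (K + 1) := by exact_mod_cast hn.2.le
            have h2 := hg hn.1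
            have h3 := hg0 n
            gcongr
        _ = 2 * ((2 : ℝ) ^ K * g (2 ^ K)) ^ 2 := by
            rw [Finset.sum_const, Nat.card_Ico, pow_succ 2 K, mul_two, Nat.add_sub_cancel,
              nsmul_eq_mul]
            push_cast
            ring
  refine summable_of_sum_range_le (c := ∑' j : ℕ, 2 * ((2 : ℝ) ^ j * g (2 ^ j)) ^ 2)
    (fun n => by positivity) fun N => ?_
  calc ∑ n ∈ Finset.range N, (n : ℝ) * g n ^ 2
      ≤ ∑ n ∈ Finset.range (2 ^ N), (n : ℝ) * g n ^ 2 :=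
        Finset.sum_le_sum_of_subset_of_nonneg
          (Finset.range_mono Nat.lt_two_pow_self.le) fun n _ _ => by positivity
    _ ≤ _ := hK N
    _ ≤ _ := (hh.mul_left 2).sum_le_tsum _ fun j _ => by positivity

lemma summable_sq_of_summable_exp {x : ℕ → ℝ} (hx : ∀ j, 0 ≤ x j)
    (h : Summable fun j => (1 - Real.exp (-x j)) ^ 2) : Summable fun j => x j ^ 2 := by
  have hlow : ∀ j, x j / (1 + x j) ≤ 1 - Real.exp (-x j) := by
    intro j
    have h0 := hx j
    have h1 : Real.exp (-x j) ≤ 1 / (1 + x j) := by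
      rw [Real.exp_neg, one_div]
      gcongr
      have := Real.add_one_le_exp (x j)
      linarith
    have h2 : x j / (1 + x j) = 1 - 1 / (1 + x j) := by
      field_simp
      ring
    linarith
  have hev : ∀ᶠ j in atTop, (1 - Real.exp (-x j)) ^ 2 < 1 / 4 :=
    h.tendsto_atTop_zero.eventually_lt_const (by norm_num)
  obtain ⟨N, hN⟩ := eventually_atTop.1 hev
  refine (summable_nat_add_iff N).1 ?_
  refine Summable.of_nonneg_of_le (fun j => sq_nonneg _) (fun j => ?_)
    (((summable_nat_add_iff N).2 h).mul_left 4)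
  have h0 := hx (j + N)
  have h1 := hlow (j + N)
  have h2 : 1 - Real.exp (-x (j + N)) < 1 / 2 :=
    lt_of_pow_lt_pow_left₀ 2 (by norm_num) ((hN (j + N) (by omega)).trans_eq (by norm_num))
  have h3 : x (j + N) < 1 := by
    have := h1.trans_lt h2
    rw [div_lt_iff₀ (by positivity)] at this
    linarith
  have h4 : x (j + N) / 2 ≤ 1 - Real.exp (-x (j + N)) := by
    refine le_trans ?_ h1
    gcongr
    linarith
  calc x (j + N) ^ 2 = 4 * (x (j + N) / 2) ^ 2 := by ring
    _ ≤ _ := by gcongr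

/-- If `∑ n (log φ(n) / φ(n))²` diverges, then infinitely often two disjoint pairs among the
first `n` digits have product at least `φ(n)`. The `j`-th block consists of `4 * 2^j` digits and
ends before index `2^(j+3)`. -/
lemma ae_infinite_pairs {φ : ℕ → ℝ} (hge : ∀ n, Real.exp 1 ≤ φ n) (hmono : Monotone φ)
    (hdiv : ¬ Summable fun n : ℕ => (n : ℝ) * (Real.log (φ n) / φ n) ^ 2) :
    ∀ᵐ d ∂(seqLaw 0), {n : ℕ | ∃ k l : ℕ, k < n ∧ l < n ∧ k ≠ l ∧
      φ n ≤ (d k : ℝ) * (d (k + 1) : ℝ) ∧ φ n ≤ (d l : ℝ) * (d (l + 1) : ℝ)}.Infinite := by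
  have h0 : (0 : ℝ) ∈ Set.Icc (0 : ℝ) 1 := ⟨le_rfl, zero_le_one⟩
  have hone : ∀ n, 1 ≤ φ n := fun n => (Real.one_le_exp zero_le_one).trans (hge n)
  have hx0 : ∀ n, 0 ≤ Real.log (φ n) / φ n := fun n =>
    div_nonneg (Real.log_nonneg (hone n)) (zero_le_one.trans (hone n))
  have hanti : Antitone fun n => Real.log (φ n) / φ n := fun m n h =>
    Real.log_div_self_antitoneOn (hge m) (hge n) (hmono h)
  let t : ℕ → ℝ := fun j => φ (2 ^ (j + 3))
  let x : ℕ → ℝ := fun j => ((2 ^ j : ℕ) : ℝ) * (Real.log (t j) / (12 * t j))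
  have hx : ∀ j, x j = 1 / 12 * (2 ^ j * (Real.log (t j) / t j)) := by
    intro j
    have : t j ≠ 0 := (zero_lt_one.trans_le (hone _)).ne'
    simp only [x]
    push_cast
    field_simp
  have hxnn : ∀ j, 0 ≤ x j := by
    intro j
    have := hx0 (2 ^ (j + 3))
    rw [hx]
    simp only [t]
    positivity
  have hq : ¬ Summable fun j => (1 - Real.exp (-x j)) ^ 2 := by
    intro h
    refine hdiv (summable_of_dyadic hx0 hanti ?_)
    refine ((summable_sq_of_summable_exp hxnn h).mul_left 144).congr fun j => ?_
    rw [hx]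
    ring
  have h := ae_infinite_blocks (L := fun j => 4 * 2 ^ j) (Q := fun j => twoPairs (t j) (2 ^ j))
    (fun j => measurableSet_twoPairs _ _) (fun j => decidedBy_twoPairs _ _)
    (fun j => sq_nonneg _) hq
    (fun j s hs => seqLaw_compl_le (measurableSet_twoPairs _ _) hs
      (le_seqLaw_twoPairs (hone _) _ hs)) h0
  have hstart : ∀ j : ℕ, start (fun j => 4 * 2 ^ j) j + 4 = 4 * 2 ^ j := by
    intro j
    induction j with
    | zero => simp [start]
    | succ j ih =>
      rw [start_succ, pow_succ]
      omega
  filter_upwards [h] with d hd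
  have hinj : Set.InjOn (fun j : ℕ => 2 ^ (j + 3)) {j | shift (start (fun j => 4 * 2 ^ j) j) d ∈
      twoPairs (t j) (2 ^ j)} := by
    intro i _ j _ hij
    have := Nat.pow_right_injective le_rfl hij
    omega
  refine (hd.image hinj).mono ?_
  rintro _ ⟨j, ⟨hj1, hj2⟩, rfl⟩
  obtain ⟨i, hi, hti⟩ := exists_of_mem_somePair hj1
  obtain ⟨i', hi', hti'⟩ := exists_of_mem_somePair hj2
  have hs := hstart j
  have hp : 2 ^ (j + 3) = 8 * 2 ^ j := by rw [pow_add]; ring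
  refine ⟨2 * i + start (fun j => 4 * 2 ^ j) j,
    2 * i' + 2 * 2 ^ j + start (fun j => 4 * 2 ^ j) j, ?_, ?_, ?_, ?_, ?_⟩
  · simp only [hp]
    omega
  · simp only [hp]
    omega
  · omega
  · rw [add_right_comm]
    exact hti
  · have he : 2 * i' + 2 * 2 ^ j + start (fun j => 4 * 2 ^ j) j + 1 =
        2 * i' + 1 + 2 * 2 ^ j + start (fun j => 4 * 2 ^ j) j := by omega
    rw [he]
    exact hti'

lemma law_zero : law 0 = volume.restrict unitIrr := by
  have : (fun y => ENNReal.ofReal (dens 0 y)) = 1 := by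
    funext y
    simp [dens]
  rw [law, this, withDensity_one]

/-- An almost sure property of the digit sequence under `seqLaw 0` holds for almost every
irrational point of `(0,1)`. -/
lemma ae_of_ae_seqLaw {P : (ℕ → ℕ) → Prop} (h : ∀ᵐ d ∂(seqLaw 0), P d) :
    ∀ᵐ x : ℝ, x ∈ unitIrr → P (digits x) := by
  have h1 := ae_of_ae_map measurable_digits.aemeasurable h
  rw [law_zero] at h1
  exact (ae_restrict_iff' measurableSet_unitIrr).1 h1

lemma volume_F2_eq_one {φ : ℕ → ℝ} (h : ∀ᵐ x : ℝ, x ∈ unitIrr →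
    {n : ℕ | ∃ k l : ℕ, k < n ∧ l < n ∧ k ≠ l ∧
      φ n ≤ (digits x k : ℝ) * (digits x (k + 1) : ℝ) ∧
      φ n ≤ (digits x l : ℝ) * (digits x (l + 1) : ℝ)}.Infinite) :
    volume (F2 φ) = 1 := by
  have hae : F2 φ =ᵐ[volume] Set.Ioo (0 : ℝ) 1 := by
    refine Filter.EventuallyEq.trans ?_ ae_unitIrr_Ioo
    filter_upwards [h] with x hx
    refine propext ⟨fun hF => ⟨hF.1, hF.2.1⟩, fun hI => ⟨hI.1, hI.2, ?_⟩⟩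
    refine (hx hI).mono ?_
    rintro n ⟨k, l, hk, hl, hkl, h1, h2⟩
    exact ⟨k + 1, l + 1, by omega, by omega, by omega, by omega, by omega, h1, h2⟩
  rw [measure_congr hae, Real.volume_Ioo, sub_zero, ENNReal.ofReal_one]

end GaussProduct

open GaussProduct

theorem F2_full_measure_of_not_summable (φ : ℕ → ℝ) (hpos : ∀ n, 0 < φ n)
    (hmono : Monotone φ)
    (hdiv : ¬ Summable fun n : ℕ => (φ n + n * Real.log (φ n) ^ 2) / φ n ^ 2) :
    volume (F2 φ) = 1 := by
  refine volume_F2_eq_one ?_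
  by_cases hA : Summable fun n => 1 / φ n
  · -- Here `φ → ∞`, so replacing `φ` by `max φ e` changes only finitely many terms.
    have hev : ∀ᶠ n in atTop, Real.exp 1 ≤ φ n := by
      have h1 : ∀ᶠ n in atTop, 1 / φ n < 1 / Real.exp 1 :=
        hA.tendsto_atTop_zero.eventually_lt_const (by positivity)
      filter_upwards [h1] with n hn
      exact ((one_div_lt_one_div (hpos n) (Real.exp_pos 1)).1 hn).le
    have hB : ¬ Summable fun n : ℕ =>
        (n : ℝ) * (Real.log (max (φ n) (Real.exp 1)) / max (φ n) (Real.exp 1)) ^ 2 := by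
      intro h
      obtain ⟨N, hN⟩ := eventually_atTop.1 hev
      refine hdiv ((summable_nat_add_iff N).1 ?_)
      refine ((summable_nat_add_iff N).2 (hA.add h)).congr fun n => ?_
      have hn := hpos (n + N)
      rw [max_eq_left (hN (n + N) (by omega))]
      field_simp
    have h := ae_of_ae_seqLaw (ae_infinite_pairs (φ := fun n => max (φ n) (Real.exp 1))
      (fun n => le_max_right _ _) (fun m n h => max_le_max_right _ (hmono h)) hB)
    filter_upwards [h] with x hx hI
    refine (hx hI).mono ?_
    rintro n ⟨k, l, hk, hl, hkl, h1, h2⟩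
    exact ⟨k, l, hk, hl, hkl, (le_max_left _ _).trans h1, (le_max_left _ _).trans h2⟩
  · -- One digit `a_{n+1} ≥ φ(n+1)` makes both products containing it large.
    filter_upwards [ae_of_ae_seqLaw (ae_infinite_large hpos hmono hA)] with x hx hI
    refine (((hx hI).sdiff (Set.finite_singleton 0)).image Nat.succ_injective.injOn).mono ?_
    rintro _ ⟨n, ⟨hn, hn0⟩, rfl⟩
    have hn1 : n ≠ 0 := hn0
    obtain ⟨m, rfl⟩ := Nat.exists_eq_succ_of_ne_zero hn1
    have hle : φ (m + 1 + 1) ≤ (digits x (m + 1) : ℝ) := hn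
    have hd : ∀ i, (1 : ℝ) ≤ (digits x i : ℝ) := fun i => by exact_mod_cast one_le_digits i hI
    refine ⟨m, m + 1, by omega, by omega, by omega, ?_, ?_⟩
    · exact hle.trans (le_mul_of_one_le_left (Nat.cast_nonneg _) (hd m))
    · exact hle.trans (le_mul_of_one_le_right (Nat.cast_nonneg _) (hd (m + 2)))
end

section
/- Let φ: ℕ → (0,∞) be a positive function with liminf_{n→∞} (log φ(n))/n = 0. Then the Hausdorff dimension of F₂(φ) equals 1. -/
/-!
A single digit `a_n ≥ φ(n)` makes both products `a_{n-1} a_n` and `a_n a_{n+1}` at least `φ(n)`, so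
it suffices to find, for exponents arbitrarily close to `1`, a large set of points having such a
digit at infinitely many positions `n`. Only the lower bound on the dimension needs an argument.

Fix a small `e > 0`. Almost every real number is not `LiouvilleWith` exponent `2 + e`, hence for
almost every `g ∈ (0,1)` there is a `C` with `a_{n+1}(g) ≤ C q_n(g) ^ e` for all `n`
(`exists_digitGrowth`). These points form a countable union of sets `growthSet e C`, and the union
has dimension `1` (`one_le_dimH_growthSet`).

Since `liminf (log φ(n)) / n = 0`, there is an infinite, very sparse set of positions such that
inserting the digit `⌈φ⌉` there increases the denominator of an `n`-th convergent by a factor of at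
most `2 ^ (e n / 4)` (`exists_positions`, `qPair_insertDigits_le`). Since `q_n ^ 2 ≥ 2 ^ (n - 1)`,
this factor is at most `2 q ^ e` with `q` the denominator before insertion. Let `f` be the map
inserting these digits into the expansion of `g ∈ growthSet e C`. If the expansions of `g` and `g'`
first differ at index `m`, then `|g - g'| ≤ q_m ^ (-2)`, while the digit bounds give
`|f g - f g'| ≥ c q_m ^ (-2 - 8 e)`; thus `|g - g'| ^ (1 + 4 e) ≤ K |f g - f g'|`
(`key_estimate`). The inverse of `f` is therefore Hölder of exponent `1 / (1 + 4 e)`, and as `f`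
takes values in `F2 φ`, one gets `1 ≤ (1 + 4 e) dimH (F2 φ)`.
-/

open scoped ENNReal
open MeasureTheory Filter

/-! ### Continued fraction orbits -/

/-- `t` is the Gauss orbit of a point with partial quotients `a`: `t n = [a n, a (n+1), …]`.
Digits are indexed from `0`, so `a n` is the `(n+1)`-st partial quotient of `t 0`. -/
structure IsCF (a : ℕ → ℕ) (t : ℕ → ℝ) : Prop where
  one_le : ∀ n, 1 ≤ a n
  pos : ∀ n, 0 < t n
  lt_one : ∀ n, t n < 1
  eqn : ∀ n, t n * (a n + t (n + 1)) = 1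

/-- The truncated orbit equations are solvable by backward recursion. -/
lemma exists_partial_orbit (N : ℕ) : ∀ a : ℕ → ℕ, (∀ n, 1 ≤ a n) →
    ∃ t : ℕ → ℝ, (∀ n, t n ∈ Set.Icc (0 : ℝ) 1) ∧ ∀ n < N, t n * (a n + t (n + 1)) = 1 := by
  induction N with
  | zero => exact fun a _ => ⟨fun _ => 0, fun _ => by simp, fun n hn => by omega⟩
  | succ N ih =>
    intro a ha
    obtain ⟨s, hs, hs'⟩ := ih (fun n => a (n + 1)) (fun n => ha _)
    have h0 : (1 : ℝ) ≤ a 0 + s 0 := by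
      have h1 : (1 : ℝ) ≤ a 0 := by exact_mod_cast ha 0
      linarith [(hs 0).1]
    refine ⟨fun n => Nat.casesOn n (1 / (a 0 + s 0)) s, ?_, ?_⟩
    · rintro (_ | n)
      · exact ⟨one_div_nonneg.2 (by linarith), by simpa using inv_le_one_of_one_le₀ h0⟩
      · exact hs n
    · rintro (_ | n) hn
      · exact one_div_mul_cancel (by linarith)
      · exact hs' n (by omega)

/-- Every sequence of positive digits is realised, by compactness of `[0,1]^ℕ`. -/
lemma exists_isCF (a : ℕ → ℕ) (ha : ∀ n, 1 ≤ a n) : ∃ t, IsCF a t := by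
  let K : ℕ → Set (ℕ → ℝ) := fun N =>
    {t | (∀ n, t n ∈ Set.Icc (0 : ℝ) 1) ∧ ∀ n < N, t n * (a n + t (n + 1)) = 1}
  have hne : (⋂ i, K i).Nonempty := by
    apply IsCompact.nonempty_iInter_of_sequence_nonempty_isCompact_isClosed
    · exact fun i t ht => ⟨ht.1, fun n hn => ht.2 n (by omega)⟩
    · exact fun i => exists_partial_orbit i a ha
    · have : K 0 = Set.univ.pi fun _ => Set.Icc (0 : ℝ) 1 := by
        ext t
        simp only [K, Set.mem_univ_pi, Set.mem_ofPred_eq]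
        exact ⟨fun h => h.1, fun h => ⟨h, fun n hn => by omega⟩⟩
      rw [this]
      exact isCompact_univ_pi fun _ => isCompact_Icc
    · intro i
      have : K i = (⋂ n, {t : ℕ → ℝ | t n ∈ Set.Icc (0 : ℝ) 1}) ∩
          ⋂ n, ⋂ (_ : n < i), {t : ℕ → ℝ | t n * (a n + t (n + 1)) = 1} := by
        ext t
        simp [K]
      rw [this]
      refine (isClosed_iInter fun n => isClosed_Icc.preimage (continuous_apply n)).inter
        (isClosed_iInter fun n => isClosed_iInter fun _ => isClosed_eq (by fun_prop) (by fun_prop))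
  obtain ⟨t, ht⟩ := hne
  rw [Set.mem_iInter] at ht
  have h01 := (ht 0).1
  have heq : ∀ n, t n * (a n + t (n + 1)) = 1 := fun n => (ht (n + 1)).2 n (by omega)
  have hpos : ∀ n, 0 < t n := by
    intro n
    refine lt_of_le_of_ne (h01 n).1 fun h => ?_
    have := heq n
    rw [← h] at this
    simp at this
  refine ⟨t, ha, hpos, fun n => ?_, heq⟩
  have h1 : (1 : ℝ) ≤ a n := by exact_mod_cast ha n
  nlinarith [heq n, hpos n, hpos (n + 1), mul_pos (hpos n) (hpos (n + 1))]

namespace IsCF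

variable {a : ℕ → ℕ} {t : ℕ → ℝ}

lemma one_div_eq (h : IsCF a t) (n : ℕ) : 1 / t n = a n + t (n + 1) := by
  rw [div_eq_iff (h.pos n).ne']
  linarith [h.eqn n]

lemma one_le_real (h : IsCF a t) (n : ℕ) : (1 : ℝ) ≤ a n := by exact_mod_cast h.one_le n

lemma gauss_iterate (h : IsCF a t) (n : ℕ) : gaussMap^[n] (t 0) = t n := by
  induction n with
  | zero => rfl
  | succ n ih =>
    rw [Function.iterate_succ_apply', ih, gaussMap, h.one_div_eq]
    have : ⌊(a n : ℝ) + t (n + 1)⌋ = (a n : ℤ) := by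
      rw [Int.floor_eq_iff]
      push_cast
      exact ⟨by linarith [h.pos (n + 1)], by linarith [h.lt_one (n + 1)]⟩
    rw [this]
    push_cast
    ring

lemma pq_eq (h : IsCF a t) (n : ℕ) : pq (t 0) (n + 1) = a n := by
  rw [pq, Nat.add_sub_cancel, h.gauss_iterate, h.one_div_eq, Nat.floor_eq_iff]
  · exact ⟨by linarith [h.pos (n + 1)], by linarith [h.lt_one (n + 1)]⟩
  · linarith [h.pos (n + 1), h.one_le_real n]

/-- A rational orbit point would have strictly decreasing denominators along the orbit. -/
lemma irrational (h : IsCF a t) : Irrational (t 0) := by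
  have key : ∀ q : ℕ, ∀ n p : ℕ, 0 < q → t n * q = p → False := by
    intro q
    induction q using Nat.strong_induction_on with
    | _ q ih =>
      intro n p hq hp
      have hq' : (0 : ℝ) < q := by exact_mod_cast hq
      have hp0 : (0 : ℝ) < p := by rw [← hp]; exact mul_pos (h.pos n) hq'
      have hpq : (p : ℝ) < q := by rw [← hp]; nlinarith [h.lt_one n]
      have heq : t (n + 1) * p = q - a n * p := by
        have := h.eqn n
        rw [← hp]
        linear_combination (q : ℝ) * this
      have hle : a n * p ≤ q := by
        have : (a n * p : ℝ) ≤ q := by nlinarith [mul_pos (h.pos (n + 1)) hp0]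
        exact_mod_cast this
      refine ih p (by exact_mod_cast hpq) (n + 1) (q - a n * p) (by exact_mod_cast hp0) ?_
      rw [heq]
      push_cast [hle]
      ring
  rintro ⟨r, hr⟩
  have hr0 : 0 < r := by
    have := h.pos 0
    rw [← hr] at this
    exact_mod_cast this
  refine key r.den 0 r.num.toNat r.pos ?_
  rw [← hr]
  have h1 : ((r.num.toNat : ℕ) : ℝ) = ((r.num : ℤ) : ℝ) := by
    have : ((r.num.toNat : ℕ) : ℤ) = r.num := Int.toNat_of_nonneg (Rat.num_pos.2 hr0).le
    exact_mod_cast this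
  rw [h1]
  exact_mod_cast Rat.mul_den_eq_num r

end IsCF

lemma gaussMap_mem {x : ℝ} (hi : Irrational x) :
    gaussMap x ∈ Set.Ioo (0 : ℝ) 1 ∧ Irrational (gaussMap x) := by
  have h1 : Irrational (gaussMap x) := by
    unfold gaussMap
    rw [one_div]
    exact (irrational_inv_iff.2 hi).sub_intCast _
  refine ⟨⟨lt_of_le_of_ne ?_ fun h => ?_, ?_⟩, h1⟩
  · exact Int.fract_nonneg _
  · exact h1.ne_zero h.symm
  · exact Int.fract_lt_one _

lemma isCF_of_irrational {x : ℝ} (hx : x ∈ Set.Ioo (0 : ℝ) 1) (hi : Irrational x) :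
    IsCF (fun n => pq x (n + 1)) (fun n => gaussMap^[n] x) := by
  have hmem : ∀ n, gaussMap^[n] x ∈ Set.Ioo (0 : ℝ) 1 ∧ Irrational (gaussMap^[n] x) := by
    intro n
    induction n with
    | zero => exact ⟨hx, hi⟩
    | succ n ih =>
      rw [Function.iterate_succ_apply']
      exact gaussMap_mem ih.2
  refine ⟨fun n => ?_, fun n => (hmem n).1.1, fun n => (hmem n).1.2, fun n => ?_⟩
  · rw [pq, Nat.add_sub_cancel, Nat.one_le_floor_iff]
    exact one_le_one_div (hmem n).1.1 (hmem n).1.2.le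
  · have h0 := (hmem n).1.1
    simp only [pq, Nat.add_sub_cancel]
    rw [Function.iterate_succ_apply', gaussMap, natCast_floor_eq_intCast_floor (by positivity)]
    field_simp
    ring

/-! ### Continuants and the geometry of cylinders -/

/-- The pair `(q_n, q_{n-1})` of consecutive convergent denominators, starting from `(1, 0)`. -/
def qPair (a : ℕ → ℕ) : ℕ → ℕ × ℕ
  | 0 => (1, 0)
  | n + 1 => (a n * (qPair a n).1 + (qPair a n).2, (qPair a n).1)

/-- The pair `(p_n, p_{n-1})` of consecutive convergent numerators, starting from `(0, 1)`. -/
def pPair (a : ℕ → ℕ) : ℕ → ℕ × ℕ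
  | 0 => (0, 1)
  | n + 1 => (a n * (pPair a n).1 + (pPair a n).2, (pPair a n).1)

lemma qPair_congr {a b : ℕ → ℕ} {n : ℕ} (h : ∀ i < n, a i = b i) : qPair a n = qPair b n := by
  induction n with
  | zero => rfl
  | succ n ih => simp only [qPair, ih fun i hi => h i (by omega), h n (by omega)]

lemma pPair_congr {a b : ℕ → ℕ} {n : ℕ} (h : ∀ i < n, a i = b i) : pPair a n = pPair b n := by
  induction n with
  | zero => rfl
  | succ n ih => simp only [pPair, ih fun i hi => h i (by omega), h n (by omega)]

lemma qPair_pos {a : ℕ → ℕ} (ha : ∀ n, 1 ≤ a n) (n : ℕ) :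
    1 ≤ (qPair a n).1 ∧ (qPair a n).2 ≤ (qPair a n).1 := by
  induction n with
  | zero => simp [qPair]
  | succ n ih =>
    simp only [qPair]
    have := Nat.mul_le_mul_right (qPair a n).1 (ha n)
    omega

lemma two_pow_le_mul {a : ℕ → ℕ} (ha : ∀ n, 1 ≤ a n) (n : ℕ) :
    2 ^ n ≤ (qPair a (n + 1)).1 * (qPair a (n + 1)).2 := by
  induction n with
  | zero => simpa [qPair] using ha 0
  | succ n ih =>
    have h1 := Nat.mul_le_mul_right (qPair a (n + 1)).1 (ha (n + 1))
    have h2 := (qPair_pos ha (n + 1)).2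
    have e : qPair a (n + 1 + 1) =
      (a (n + 1) * (qPair a (n + 1)).1 + (qPair a (n + 1)).2, (qPair a (n + 1)).1) := rfl
    rw [e]
    simp only
    rw [pow_succ]
    nlinarith

/-- Denominators grow at least like `2 ^ (n / 2)`. -/
lemma two_pow_le_sq {a : ℕ → ℕ} (ha : ∀ n, 1 ≤ a n) (n : ℕ) :
    2 ^ n ≤ 2 * (qPair a n).1 ^ 2 := by
  rcases n with _ | n
  · simp [qPair]
  · have h1 := two_pow_le_mul ha n
    have h2 := (qPair_pos ha (n + 1)).2
    rw [pow_succ]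
    nlinarith

lemma det_sq (a : ℕ → ℕ) (n : ℕ) :
    (((pPair a n).1 : ℝ) * (qPair a n).2 - (pPair a n).2 * (qPair a n).1) ^ 2 = 1 := by
  induction n with
  | zero => simp [pPair, qPair]
  | succ n ih =>
    simp only [pPair, qPair]
    push_cast
    linear_combination ih

lemma abs_det (a : ℕ → ℕ) (n : ℕ) :
    |((pPair a n).1 : ℝ) * (qPair a n).2 - (pPair a n).2 * (qPair a n).1| = 1 := by
  have := det_sq a n
  rw [← sq_abs] at this
  exact (pow_eq_one_iff_of_nonneg (abs_nonneg _) two_ne_zero).1 this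

namespace IsCF

variable {a b : ℕ → ℕ} {t s : ℕ → ℝ}

/-- `x = (p_n + p_{n-1} T^n x) / (q_n + q_{n-1} T^n x)`. -/
lemma mobius (h : IsCF a t) (n : ℕ) :
    t 0 * ((qPair a n).1 + (qPair a n).2 * t n) = (pPair a n).1 + (pPair a n).2 * t n := by
  induction n with
  | zero => simp [qPair, pPair]
  | succ n ih =>
    simp only [pPair, qPair]
    push_cast
    have e := h.eqn n
    apply mul_left_cancel₀ (h.pos n).ne'
    linear_combination ih + ((t 0 * (qPair a n).1 - (pPair a n).1)) * e

/-- Distance of two points in a common cylinder of order `n`, in terms of their `n`-th iterates. -/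
lemma abs_sub_mul (h : IsCF a t) (h' : IsCF b s) {n : ℕ} (hab : ∀ i < n, a i = b i) :
    |t 0 - s 0| * (((qPair a n).1 + (qPair a n).2 * t n) *
      ((qPair a n).1 + (qPair a n).2 * s n)) = |t n - s n| := by
  have h1 := h.mobius n
  have h2 := h'.mobius n
  rw [← qPair_congr hab, ← pPair_congr hab] at h2
  have p1 : (0 : ℝ) ≤ (qPair a n).1 + (qPair a n).2 * t n := by
    have := h.pos n
    positivity
  have p2 : (0 : ℝ) ≤ (qPair a n).1 + (qPair a n).2 * s n := by
    have := h'.pos n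
    positivity
  rw [← abs_of_nonneg (mul_nonneg p1 p2), ← abs_mul]
  have e : (t 0 - s 0) * (((qPair a n).1 + (qPair a n).2 * t n) *
      ((qPair a n).1 + (qPair a n).2 * s n)) =
      ((pPair a n).1 * (qPair a n).2 - (pPair a n).2 * (qPair a n).1) * (s n - t n) := by
    linear_combination ((qPair a n).1 + (qPair a n).2 * s n : ℝ) * h1 -
      ((qPair a n).1 + (qPair a n).2 * t n : ℝ) * h2
  rw [e, abs_mul, abs_det, one_mul, abs_sub_comm]

lemma q_pos (h : IsCF a t) (n : ℕ) : (1 : ℝ) ≤ (qPair a n).1 := by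
  exact_mod_cast (qPair_pos h.one_le n).1

lemma abs_sub_le (h : IsCF a t) (h' : IsCF b s) {n : ℕ} (hab : ∀ i < n, a i = b i) :
    |t 0 - s 0| * (qPair a n).1 ^ 2 ≤ 1 := by
  have e := h.abs_sub_mul h' hab
  have q1 := h.q_pos n
  have : |t n - s n| ≤ 1 := abs_le.2
    ⟨by linarith [h.pos n, h'.lt_one n], by linarith [h'.pos n, h.lt_one n]⟩
  rw [← e] at this
  refine le_trans (mul_le_mul_of_nonneg_left ?_ (abs_nonneg _)) this
  rw [sq]
  have := mul_nonneg (Nat.cast_nonneg (α := ℝ) (qPair a n).2) (h.pos n).le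
  have := mul_nonneg (Nat.cast_nonneg (α := ℝ) (qPair a n).2) (h'.pos n).le
  apply mul_le_mul <;> linarith

lemma le_abs_sub (h : IsCF a t) (h' : IsCF b s) {n : ℕ} (hab : ∀ i < n, a i = b i) :
    |t n - s n| ≤ |t 0 - s 0| * (4 * (qPair a n).1 ^ 2) := by
  rw [← h.abs_sub_mul h' hab]
  refine mul_le_mul_of_nonneg_left ?_ (abs_nonneg _)
  have q1 := h.q_pos n
  have q2 : ((qPair a n).2 : ℝ) ≤ (qPair a n).1 := by exact_mod_cast (qPair_pos h.one_le n).2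
  have q0 : (0 : ℝ) ≤ (qPair a n).2 := Nat.cast_nonneg _
  have u1 : (qPair a n).2 * t n ≤ (qPair a n).1 := by nlinarith [h.pos n, h.lt_one n]
  have u2 : (qPair a n).2 * s n ≤ (qPair a n).1 := by nlinarith [h'.pos n, h'.lt_one n]
  have : (4 * (qPair a n).1 ^ 2 : ℝ) = (2 * (qPair a n).1) * (2 * (qPair a n).1) := by ring
  rw [this]
  have := mul_nonneg q0 (h'.pos n).le
  apply mul_le_mul <;> linarith

/-- `|x - p_n / q_n| ≤ 1 / (a_{n+1} q_n ^ 2)`. -/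
lemma approx (h : IsCF a t) (n : ℕ) :
    |t 0 - (pPair a n).1 / (qPair a n).1| * (a n * (qPair a n).1 ^ 2) ≤ 1 := by
  have q1 := h.q_pos n
  have q0 : (0 : ℝ) ≤ (qPair a n).2 := Nat.cast_nonneg _
  set D : ℝ := (qPair a n).1 + (qPair a n).2 * t n with hD
  have hDq : ((qPair a n).1 : ℝ) ≤ D := by
    have := mul_nonneg q0 (h.pos n).le
    linarith
  have m := h.mobius n
  have e : (t 0 - (pPair a n).1 / (qPair a n).1) * ((qPair a n).1 * D) =
      - (((pPair a n).1 * (qPair a n).2 - (pPair a n).2 * (qPair a n).1) * t n) := by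
    rw [← hD] at m
    have h0 : ((qPair a n).1 : ℝ) ≠ 0 := by linarith
    field_simp
    rw [sub_mul, mul_assoc, mul_comm _ D, ← mul_assoc, m, hD]
    ring
  have e2 := congrArg abs e
  rw [abs_neg, abs_mul, abs_of_nonneg (by nlinarith : (0 : ℝ) ≤ (qPair a n).1 * D), abs_mul,
    abs_det, one_mul, abs_of_pos (h.pos n)] at e2
  have ta : t n * a n ≤ 1 := by nlinarith [h.eqn n, mul_pos (h.pos n) (h.pos (n + 1))]
  calc |t 0 - (pPair a n).1 / (qPair a n).1| * (a n * (qPair a n).1 ^ 2)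
      = (|t 0 - (pPair a n).1 / (qPair a n).1| * ((qPair a n).1 * (qPair a n).1)) * a n := by ring
    _ ≤ (|t 0 - (pPair a n).1 / (qPair a n).1| * ((qPair a n).1 * D)) * a n := by gcongr
    _ = t n * a n := by rw [e2]
    _ ≤ 1 := ta

/-- Points with different leading digits are separated, quantitatively in the first two digits. -/
lemma digit_gap (h : IsCF a t) (h' : IsCF b s) {n : ℕ} (hne : a n ≠ b n) {H : ℝ}
    (ha : (a n : ℝ) + 1 ≤ H) (hb : (b n : ℝ) + 1 ≤ H) (ha' : (a (n + 1) : ℝ) + 1 ≤ H)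
    (hb' : (b (n + 1) : ℝ) + 1 ≤ H) : 1 ≤ |t n - s n| * H ^ 3 := by
  wlog hlt : a n < b n generalizing a b t s
  · rw [abs_sub_comm]
    exact this h' h hne.symm hb ha hb' ha' (by omega)
  have hab : (a n : ℝ) + 1 ≤ b n := by exact_mod_cast hlt
  have hH : 0 < H := by linarith [h.one_le_real n]
  have e2 := h'.eqn n
  have e1 := h.eqn n
  -- the next iterate of the point with the larger digit keeps it away from the cylinder endpoint
  have hs : 1 ≤ s (n + 1) * H := by
    have := h'.eqn (n + 1)
    nlinarith [h'.pos (n + 1), h'.lt_one (n + 2)]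
  have ht1 : 1 ≤ t n * H := by nlinarith [h.pos n, h.lt_one (n + 1)]
  have hs1 : 1 ≤ s n * H := by nlinarith [h'.pos n, h'.lt_one (n + 1)]
  have e : t n - s n = t n * s n * (b n + s (n + 1) - a n - t (n + 1)) := by
    linear_combination (- t n) * e2 + s n * e1
  have hd : s (n + 1) ≤ b n + s (n + 1) - a n - t (n + 1) := by linarith [h.lt_one (n + 1)]
  have hp := mul_pos (h.pos n) (h'.pos n)
  have : t n * s n * s (n + 1) ≤ |t n - s n| := by
    refine le_trans ?_ (le_abs_self _)
    rw [e]
    exact mul_le_mul_of_nonneg_left hd hp.le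
  calc (1 : ℝ) ≤ (t n * H) * (s n * H) * (s (n + 1) * H) :=
        one_le_mul_of_one_le_of_one_le (one_le_mul_of_one_le_of_one_le ht1 hs1) hs
    _ = (t n * s n * s (n + 1)) * H ^ 3 := by ring
    _ ≤ _ := by gcongr

/-- A point is determined by its digits. -/
lemma eq_of_digits_eq (h : IsCF a t) (h' : IsCF b s) (hab : ∀ i, a i = b i) : t 0 = s 0 := by
  by_contra hne
  have hpos : 0 < |t 0 - s 0| := abs_pos.2 (sub_ne_zero.2 hne)
  obtain ⟨n, hn⟩ := pow_unbounded_of_one_lt (2 / |t 0 - s 0|) (one_lt_two (α := ℝ))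
  have h1 := h.abs_sub_le h' (n := n) fun i _ => hab i
  have h2 : (2 : ℝ) ^ n ≤ 2 * (qPair a n).1 ^ 2 := by exact_mod_cast two_pow_le_sq h.one_le n
  rw [div_lt_iff₀ hpos] at hn
  nlinarith

end IsCF

/-! ### Inserting digits -/

open Classical in
/-- The number of positions below `n` outside `S`. -/
noncomputable def skipIdx (S : Set ℕ) : ℕ → ℕ
  | 0 => 0
  | n + 1 => if n ∈ S then skipIdx S n else skipIdx S n + 1

open Classical in
/-- The sequence carrying the digit `A n` at each position `n ∈ S`, and the digits of `a`, in
order, at the remaining positions. -/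
noncomputable def insertDigits (S : Set ℕ) (A a : ℕ → ℕ) (n : ℕ) : ℕ :=
  if n ∈ S then A n else a (skipIdx S n)

open Classical in
/-- The factor by which inserting digits at the positions of `S` below `n` may increase the
denominator of a convergent. -/
noncomputable def insertCost (S : Set ℕ) (A : ℕ → ℕ) : ℕ → ℝ
  | 0 => 1
  | n + 1 => (if n ∈ S then 2 * ((A n : ℝ) + 1) else 1) * insertCost S A n

variable {S : Set ℕ} {A a a' : ℕ → ℕ}

lemma one_le_insertCost (n : ℕ) : 1 ≤ insertCost S A n := by
  induction n with
  | zero => simp [insertCost]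
  | succ n ih =>
    rw [insertCost]
    refine one_le_mul_of_one_le_of_one_le ?_ ih
    split_ifs
    · have : (0 : ℝ) ≤ A n := Nat.cast_nonneg _
      linarith
    · exact le_rfl

lemma insertDigits_pos (hA : ∀ n, 1 ≤ A n) (ha : ∀ n, 1 ≤ a n) (n : ℕ) :
    1 ≤ insertDigits S A a n := by
  unfold insertDigits
  split_ifs
  · exact hA n
  · exact ha _

/-- The denominators of the sequence with insertions, compared with those of the original one.
Right after an insertion the previous denominator `q_{n-1}` is controlled only by `Q`, not by its
predecessor; the spare factor `2` in the cost absorbs this at the next original digit. -/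
lemma qPair_insertDigits_aux (ha : ∀ n, 1 ≤ a n) (n : ℕ) :
    (((qPair (insertDigits S A a) n).1 : ℝ) ≤ insertCost S A n * (qPair a (skipIdx S n)).1 ∧
      ((qPair (insertDigits S A a) n).2 : ℝ) ≤ insertCost S A n * (qPair a (skipIdx S n)).2) ∨
    (2 * ((qPair (insertDigits S A a) n).1 : ℝ) ≤ insertCost S A n * (qPair a (skipIdx S n)).1 ∧
      2 * ((qPair (insertDigits S A a) n).2 : ℝ) ≤
        insertCost S A n * (qPair a (skipIdx S n)).1) := by
  induction n with
  | zero => left; simp [qPair, insertCost, skipIdx]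
  | succ n ih =>
    have hc := one_le_insertCost (S := S) (A := A) n
    have hQ : ((qPair a (skipIdx S n)).2 : ℝ) ≤ (qPair a (skipIdx S n)).1 := by
      exact_mod_cast (qPair_pos ha (skipIdx S n)).2
    have hQ0 : (0 : ℝ) ≤ (qPair a (skipIdx S n)).2 := Nat.cast_nonneg _
    set q : ℝ := ((qPair (insertDigits S A a) n).1 : ℝ) with hq
    set q' : ℝ := ((qPair (insertDigits S A a) n).2 : ℝ) with hq'
    have q0 : 0 ≤ q := Nat.cast_nonneg _
    have q0' : 0 ≤ q' := Nat.cast_nonneg _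
    set c := insertCost S A n
    by_cases hn : n ∈ S
    · right
      simp only [qPair, insertCost, skipIdx, insertDigits, hn, if_true]
      push_cast
      rw [← hq, ← hq']
      have hA0 : (0 : ℝ) ≤ A n := Nat.cast_nonneg _
      set Q : ℝ := ((qPair a (skipIdx S n)).1 : ℝ)
      have h1 : q ≤ c * Q := by rcases ih with ih | ih <;> linarith [ih.1]
      have h2 : q' ≤ c * Q := by
        rcases ih with ih | ih
        · exact ih.2.trans (mul_le_mul_of_nonneg_left hQ (by linarith))
        · linarith [ih.2]
      have h3 := mul_le_mul_of_nonneg_left h1 hA0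
      constructor <;> nlinarith
    · left
      simp only [qPair, insertCost, skipIdx, insertDigits, hn, if_false, one_mul]
      push_cast
      rw [← hq, ← hq']
      have hb : (1 : ℝ) ≤ a (skipIdx S n) := by exact_mod_cast ha _
      set b : ℝ := (a (skipIdx S n) : ℝ)
      set Q : ℝ := ((qPair a (skipIdx S n)).1 : ℝ)
      set Q' : ℝ := ((qPair a (skipIdx S n)).2 : ℝ)
      rcases ih with ih | ih
      · exact ⟨by nlinarith [mul_le_mul_of_nonneg_left ih.1 (zero_le_one.trans hb)], ih.1⟩
      · have h3 := mul_le_mul_of_nonneg_left ih.1 (zero_le_one.trans hb)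
        have hcQ : 0 ≤ c * Q := by linarith
        have hcQ' : 0 ≤ c * Q' := mul_nonneg (by linarith) hQ0
        exact ⟨by nlinarith [mul_le_mul_of_nonneg_right hb hcQ], by linarith⟩

lemma qPair_insertDigits_le (ha : ∀ n, 1 ≤ a n) (n : ℕ) :
    ((qPair (insertDigits S A a) n).1 : ℝ) ≤ insertCost S A n * (qPair a (skipIdx S n)).1 := by
  rcases qPair_insertDigits_aux (S := S) (A := A) ha n with h | h
  · exact h.1
  · have : (0 : ℝ) ≤ (qPair (insertDigits S A a) n).1 := Nat.cast_nonneg _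
    linarith [h.1]

lemma four_pow_le (hA : ∀ n, 1 ≤ A n) (n : ℕ) :
    (4 : ℝ) ^ n ≤ insertCost S A n * 4 ^ skipIdx S n := by
  induction n with
  | zero => simp [insertCost, skipIdx]
  | succ n ih =>
    rw [insertCost, skipIdx, pow_succ]
    have hc := one_le_insertCost (S := S) (A := A) n
    split_ifs
    · have : (1 : ℝ) ≤ A n := by exact_mod_cast hA n
      have hp : 0 ≤ insertCost S A n * 4 ^ skipIdx S n := by positivity
      nlinarith
    · rw [pow_succ]
      linarith

/-- Each insertion costs a factor of at least `4`, so a cost below `2 ^ n` leaves at least half of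
the first `n` positions to original digits. -/
lemma le_two_mul_skipIdx (hA : ∀ n, 1 ≤ A n) {e : ℝ} (he1 : e ≤ 1)
    (hcost : ∀ n : ℕ, insertCost S A n ≤ (2 : ℝ) ^ (e / 4 * n)) (n : ℕ) :
    n ≤ 2 * skipIdx S n := by
  have h1 := four_pow_le (S := S) hA n
  have h2 : insertCost S A n ≤ (2 : ℝ) ^ n := by
    refine (hcost n).trans ?_
    rw [← Real.rpow_natCast]
    refine Real.rpow_le_rpow_of_exponent_le one_le_two ?_
    have : (0 : ℝ) ≤ n := Nat.cast_nonneg _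
    nlinarith
  have h3 : (2 : ℝ) ^ n * 2 ^ n ≤ 2 ^ n * 2 ^ (2 * skipIdx S n) := by
    calc (2 : ℝ) ^ n * 2 ^ n = 4 ^ n := by rw [← mul_pow]; norm_num
      _ ≤ insertCost S A n * 4 ^ skipIdx S n := h1
      _ ≤ 2 ^ n * 4 ^ skipIdx S n := by gcongr
      _ = 2 ^ n * 2 ^ (2 * skipIdx S n) := by rw [pow_mul]; norm_num
  have h4 := le_of_mul_le_mul_left h3 (by positivity)
  exact (pow_le_pow_iff_right₀ one_lt_two).1 h4

lemma skipIdx_mono_succ (n : ℕ) : skipIdx S n ≤ skipIdx S (n + 1) := by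
  rw [skipIdx]
  split_ifs <;> omega

/-- The position at which the `m`-th original digit is placed. -/
lemma exists_position (h : ∀ n, n ≤ 2 * skipIdx S n) (m : ℕ) :
    ∃ N, N ∉ S ∧ skipIdx S N = m := by
  have hex : ∃ N, m < skipIdx S N := ⟨2 * m + 1, by have := h (2 * m + 1); omega⟩
  classical
  have hs := Nat.find_spec hex
  obtain ⟨N, hN⟩ : ∃ N, Nat.find hex = N + 1 := by
    refine Nat.exists_eq_succ_of_ne_zero fun h0 => ?_
    rw [h0] at hs
    simp [skipIdx] at hs
  have hm : ¬ m < skipIdx S N := Nat.find_min hex (by omega)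
  rw [hN, skipIdx] at hs
  refine ⟨N, fun hS => ?_, ?_⟩
  · rw [if_pos hS] at hs
    exact hm hs
  · split_ifs at hs <;> omega

lemma skipIdx_lt {N i : ℕ} (hi : i < N) (hiS : i ∉ S) : skipIdx S i < skipIdx S N := by
  have h1 : skipIdx S i < skipIdx S (i + 1) := by rw [skipIdx, if_neg hiS]; omega
  exact h1.trans_le (monotone_nat_of_le_succ skipIdx_mono_succ hi)

/-! ### Insertion contracts distances by at most a power close to one -/

/-- Digit growth `a_{n+1} ≤ C q_n ^ e`. -/
def DigitGrowth (e C : ℝ) (a : ℕ → ℕ) : Prop :=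
  ∀ n, (a n : ℝ) ≤ C * ((qPair a n).1 : ℝ) ^ e

lemma digit_bounds {e C : ℝ} (he0 : 0 < e) (he1 : e ≤ 1) (hC : 1 ≤ C) (ha : ∀ n, 1 ≤ a n)
    (hg : DigitGrowth e C a) (m : ℕ) {R : ℝ} (hR : R = ((qPair a m).1 : ℝ) ^ e) :
    (a m : ℝ) + 1 ≤ 3 * C ^ 2 * R ^ 2 ∧ (a (m + 1) : ℝ) + 1 ≤ 3 * C ^ 2 * R ^ 2 := by
  have hQ : (1 : ℝ) ≤ (qPair a m).1 := by exact_mod_cast (qPair_pos ha m).1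
  have hR1 : 1 ≤ R := hR ▸ Real.one_le_rpow hQ he0.le
  have hCR : 1 ≤ C * R := one_le_mul_of_one_le_of_one_le hC hR1
  have h1 : (a m : ℝ) ≤ C * R := hR ▸ hg m
  have hsq : C * R ≤ C ^ 2 * R ^ 2 := by nlinarith
  refine ⟨by nlinarith, ?_⟩
  have hq : ((qPair a (m + 1)).1 : ℝ) ≤ 2 * C * R * (qPair a m).1 := by
    have h2 : ((qPair a m).2 : ℝ) ≤ (qPair a m).1 := by exact_mod_cast (qPair_pos ha m).2
    simp only [qPair]
    push_cast
    nlinarith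
  have h3 : ((qPair a (m + 1)).1 : ℝ) ^ e ≤ 2 * C * R * R := by
    calc ((qPair a (m + 1)).1 : ℝ) ^ e ≤ (2 * C * R * (qPair a m).1) ^ e :=
          Real.rpow_le_rpow (Nat.cast_nonneg _) hq he0.le
      _ = (2 * C * R) ^ e * R := by rw [Real.mul_rpow (by positivity) (by positivity), ← hR]
      _ ≤ (2 * C * R) ^ (1 : ℝ) * R := by
          gcongr
          linarith
      _ = 2 * C * R * R := by rw [Real.rpow_one]
  have h4 := (hg (m + 1)).trans (mul_le_mul_of_nonneg_left h3 (by linarith))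
  nlinarith

/-- Inserting digits shrinks the distance of two points with controlled digit growth to no less
than about its power `1 + 4 e`; the points are compared at the first index where they differ. -/
lemma key_estimate {e C : ℝ} (he0 : 0 < e) (he1 : e ≤ 1) (hC : 1 ≤ C) (hA : ∀ n, 1 ≤ A n)
    (hcost : ∀ n : ℕ, insertCost S A n ≤ (2 : ℝ) ^ (e / 4 * n))
    {t t' x x' : ℕ → ℝ} (ht : IsCF a t) (ht' : IsCF a' t')
    (hg : DigitGrowth e C a) (hg' : DigitGrowth e C a')
    (hx : IsCF (insertDigits S A a) x) (hx' : IsCF (insertDigits S A a') x') :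
    |t 0 - t' 0| ^ (1 + 4 * e) ≤ 432 * C ^ 6 * |x 0 - x' 0| := by
  by_cases hall : ∀ i, a i = a' i
  · rw [ht.eq_of_digits_eq ht' hall, sub_self, abs_zero, Real.zero_rpow (by linarith)]
    positivity
  push Not at hall
  classical
  set m := Nat.find hall with hm
  have hne : a m ≠ a' m := Nat.find_spec hall
  have heq : ∀ i < m, a i = a' i := fun i hi => not_not.1 (Nat.find_min hall hi)
  have hhalf := le_two_mul_skipIdx hA he1 hcost
  obtain ⟨N, hNS, hNm⟩ := exists_position hhalf m
  have hN2 := hhalf N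
  rw [hNm] at hN2
  set Q : ℝ := ((qPair a m).1 : ℝ) with hQ
  have hQ1 : 1 ≤ Q := ht.q_pos m
  set R : ℝ := Q ^ e with hR
  have hR1 : 1 ≤ R := Real.one_le_rpow hQ1 he0.le
  have hpowN : (2 : ℝ) ^ (e / 4 * N) ≤ 2 ^ (e / 2) * R := by
    calc (2 : ℝ) ^ (e / 4 * N) ≤ 2 ^ ((m : ℝ) * (e / 2)) := by
          refine Real.rpow_le_rpow_of_exponent_le one_le_two ?_
          have : (N : ℝ) ≤ 2 * m := by exact_mod_cast hN2
          nlinarith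
      _ = ((2 : ℝ) ^ m) ^ (e / 2) := by rw [Real.rpow_mul (by norm_num), Real.rpow_natCast]
      _ ≤ (2 * Q ^ 2) ^ (e / 2) := by
          refine Real.rpow_le_rpow (by positivity) ?_ (by linarith)
          rw [hQ]
          exact_mod_cast two_pow_le_sq ht.one_le m
      _ = 2 ^ (e / 2) * R := by
          rw [Real.mul_rpow (by norm_num) (by positivity), ← Real.rpow_natCast Q 2,
            ← Real.rpow_mul (by linarith), hR]
          congr 2
          push_cast
          ring
  have h2e : (2 : ℝ) ^ (e / 2) ≤ 2 := by
    calc (2 : ℝ) ^ (e / 2) ≤ 2 ^ (1 : ℝ) :=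
          Real.rpow_le_rpow_of_exponent_le one_le_two (by linarith)
      _ = 2 := Real.rpow_one 2
  have hcN : insertCost S A N ≤ 2 * R := (hcost N).trans (hpowN.trans (by gcongr))
  set H : ℝ := 3 * C ^ 2 * R ^ 2 with hH
  have hCR : C * R ≤ C ^ 2 * R ^ 2 := by
    nlinarith [one_le_mul_of_one_le_of_one_le hC hR1]
  have hRH : 2 * R ≤ H := by nlinarith
  have hAH : N + 1 ∈ S → (A (N + 1) : ℝ) + 1 ≤ H := by
    intro hS
    have h1 := hcost (N + 2)
    rw [insertCost, if_pos hS] at h1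
    have h2 := one_le_insertCost (S := S) (A := A) (N + 1)
    have h3 : (2 : ℝ) ^ (e / 4 * ((N + 2 : ℕ) : ℝ)) ≤ 4 * R := by
      have : e / 4 * ((N + 2 : ℕ) : ℝ) = e / 4 * N + e / 2 := by push_cast; ring
      rw [this, Real.rpow_add (by norm_num)]
      have h4 : (2 : ℝ) ^ (e / 4 * N) ≤ 2 * R := hpowN.trans (by gcongr)
      calc (2 : ℝ) ^ (e / 4 * N) * 2 ^ (e / 2) ≤ (2 * R) * 2 := by gcongr
        _ = 4 * R := by ring
    have hA0 : (0 : ℝ) ≤ A (N + 1) := Nat.cast_nonneg _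
    nlinarith
  have hR' : R = ((qPair a' m).1 : ℝ) ^ e := by rw [hR, hQ, qPair_congr heq]
  have d := digit_bounds he0 he1 hC ht.one_le hg m hR
  have d' := digit_bounds he0 he1 hC ht'.one_le hg' m hR'
  have hN1 : skipIdx S (N + 1) = m + 1 := by rw [skipIdx, if_neg hNS, hNm]
  have iN : ∀ b : ℕ → ℕ, insertDigits S A b N = b m := fun b => by
    rw [insertDigits, if_neg hNS, hNm]
  have iN1 : ∀ b : ℕ → ℕ, (b (m + 1) : ℝ) + 1 ≤ H →
      (insertDigits S A b (N + 1) : ℝ) + 1 ≤ H := fun b hb => by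
    unfold insertDigits
    split_ifs with hS
    · exact hAH hS
    · rwa [hN1]
  have gap := hx.digit_gap hx' (n := N) (H := H) (by rwa [iN, iN]) (by rw [iN]; exact d.1)
    (by rw [iN]; exact d'.1) (iN1 a d.2) (iN1 a' d'.2)
  have heqN : ∀ i < N, insertDigits S A a i = insertDigits S A a' i := by
    intro i hi
    unfold insertDigits
    split_ifs with hS
    · rfl
    · exact heq _ (hNm ▸ skipIdx_lt hi hS)
  have low := hx.le_abs_sub hx' heqN
  have up := ht.abs_sub_le ht' heq
  have hqN : ((qPair (insertDigits S A a) N).1 : ℝ) ≤ 2 * R * Q := by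
    refine (qPair_insertDigits_le ht.one_le N).trans ?_
    rw [hNm]
    gcongr
  set D := |t 0 - t' 0|
  set E := |x 0 - x' 0|
  have hE : 0 ≤ E := abs_nonneg _
  have main : 1 ≤ 432 * C ^ 6 * E * (Q ^ 2 * R ^ 8) := by
    calc (1 : ℝ) ≤ |x N - x' N| * H ^ 3 := gap
      _ ≤ (E * (4 * ((qPair (insertDigits S A a) N).1 : ℝ) ^ 2)) * H ^ 3 := by gcongr
      _ ≤ (E * (4 * (2 * R * Q) ^ 2)) * H ^ 3 := by gcongr
      _ = _ := by rw [hH]; ring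
  have hpow : D ^ (1 + 4 * e) * (Q ^ 2 * R ^ 8) ≤ 1 := by
    have e1 : Q ^ 2 * R ^ 8 = (Q ^ 2) ^ (1 + 4 * e) := by
      rw [hR, ← Real.rpow_natCast (Q ^ e) 8, ← Real.rpow_mul (by linarith),
        ← Real.rpow_natCast Q 2, ← Real.rpow_mul (by linarith), ← Real.rpow_add (by linarith)]
      congr 1
      push_cast
      ring
    rw [e1, ← Real.mul_rpow (abs_nonneg _) (by positivity)]
    exact Real.rpow_le_one (by positivity) up (by linarith)
  have hpos : 0 < Q ^ 2 * R ^ 8 := by positivity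
  exact le_of_mul_le_mul_right (hpow.trans main) hpos

/-! ### Typical digit growth -/

/-- A number not approximable to exponent `2 + e` has `a_{n+1} ≤ C q_n ^ e`, because
`|x - p_n / q_n| ≤ 1 / (a_{n+1} q_n ^ 2)`. -/
lemma exists_digitGrowth {e : ℝ} (he : 0 < e) {t : ℕ → ℝ} (h : IsCF a t)
    (hL : ¬ LiouvilleWith (2 + e) (t 0)) : ∃ C : ℕ, DigitGrowth e (C + 1) a := by
  have hL1 : ∀ᶠ n : ℕ in atTop, ∀ m : ℤ,
      ¬ (t 0 ≠ m / n ∧ |t 0 - m / n| < 1 / (n : ℝ) ^ (2 + e)) := by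
    by_contra hcon
    refine hL ⟨1, ?_⟩
    rw [Filter.Frequently]
    simpa only [not_exists] using hcon
  obtain ⟨n₀, hn₀⟩ := eventually_atTop.1 hL1
  refine ⟨∑ i ∈ Finset.range (2 * n₀ ^ 2), a i, fun m => ?_⟩
  have hq1 := h.q_pos m
  have hqe : 1 ≤ ((qPair a m).1 : ℝ) ^ e := Real.one_le_rpow hq1 he.le
  have hC0 : (0 : ℝ) ≤ ((∑ i ∈ Finset.range (2 * n₀ ^ 2), a i : ℕ) : ℝ) := Nat.cast_nonneg _
  by_cases hm : m < 2 * n₀ ^ 2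
  · have h1 : a m ≤ ∑ i ∈ Finset.range (2 * n₀ ^ 2), a i :=
      Finset.single_le_sum (f := a) (fun _ _ => Nat.zero_le _) (Finset.mem_range.2 hm)
    have h2 : (a m : ℝ) ≤ ((∑ i ∈ Finset.range (2 * n₀ ^ 2), a i : ℕ) : ℝ) := by
      exact_mod_cast h1
    nlinarith
  · have hqn : n₀ ≤ (qPair a m).1 := by
      have h1 := two_pow_le_sq h.one_le m
      have h2 : m < 2 ^ m := Nat.lt_two_pow_self
      nlinarith
    have h3 := hn₀ _ hqn (pPair a m).1
    have hne : t 0 ≠ (((pPair a m).1 : ℤ) : ℝ) / ((qPair a m).1 : ℝ) := by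
      intro hcon
      exact h.irrational ⟨((pPair a m).1 : ℚ) / (qPair a m).1, by rw [hcon]; push_cast; rfl⟩
    have h4 : 1 / ((qPair a m).1 : ℝ) ^ (2 + e) ≤ |t 0 - (pPair a m).1 / (qPair a m).1| := by
      by_contra hlt
      push Not at hlt
      exact h3 ⟨hne, by simpa only [Int.cast_natCast] using hlt⟩
    have h5 := h.approx m
    have hqpos : (0 : ℝ) < (qPair a m).1 := by linarith
    have h6 : 1 / ((qPair a m).1 : ℝ) ^ (2 + e) * (a m * (qPair a m).1 ^ 2) ≤ 1 :=
      (mul_le_mul_of_nonneg_right h4 (by positivity)).trans h5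
    rw [Real.rpow_add hqpos, Real.rpow_two, one_div, inv_mul_le_iff₀ (by positivity), mul_one,
      mul_comm] at h6
    have h7 := le_of_mul_le_mul_left h6 (by positivity)
    nlinarith

/-- The irrationals of `(0,1)` whose digits satisfy `a_{n+1} ≤ (C + 1) q_n ^ e`. -/
def growthSet (e : ℝ) (C : ℕ) : Set ℝ :=
  {x | x ∈ Set.Ioo (0 : ℝ) 1 ∧ Irrational x ∧ DigitGrowth e (C + 1) fun n => pq x (n + 1)}

lemma one_le_dimH_growthSet {e : ℝ} (he : 0 < e) : 1 ≤ dimH (⋃ C, growthSet e C) := by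
  have hirr : ∀ᵐ x : ℝ, Irrational x := by
    rw [ae_iff]
    have : {x : ℝ | ¬ Irrational x} = Set.range ((↑) : ℚ → ℝ) := by
      ext x
      simp [Irrational]
    rw [this]
    exact (Set.countable_range _).measure_zero _
  have hsub : ∀ᵐ x : ℝ, x ∈ Set.Ioo (0 : ℝ) 1 → x ∈ ⋃ C, growthSet e C := by
    filter_upwards [hirr, ae_not_liouvilleWith] with x hx hL hx01
    obtain ⟨C, hC⟩ := exists_digitGrowth he (isCF_of_irrational hx01 hx) (hL (2 + e) (by linarith))
    exact Set.mem_iUnion.2 ⟨C, hx01, hx, hC⟩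
  have hvol : volume (Set.Ioo (0 : ℝ) 1) ≤ volume (⋃ C, growthSet e C) := measure_mono_ae hsub
  have hne : Measure.hausdorffMeasure ((1 : NNReal) : ℝ) (⋃ C, growthSet e C) ≠ 0 := by
    rw [NNReal.coe_one, hausdorffMeasure_real]
    rw [Real.volume_Ioo] at hvol
    intro h0
    rw [h0] at hvol
    simp at hvol
  simpa using le_dimH_of_hausdorffMeasure_ne_zero hne

/-! ### Sparse positions -/

lemma log_insertCost [DecidablePred (· ∈ S)] (n : ℕ) : Real.log (insertCost S A n) =
    ∑ i ∈ (Finset.range n).filter (· ∈ S), Real.log (2 * ((A i : ℝ) + 1)) := by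
  induction n with
  | zero => simp [insertCost]
  | succ n ih =>
    have hc := one_le_insertCost (S := S) (A := A) n
    rw [Finset.sum_filter, Finset.sum_range_succ, ← Finset.sum_filter, ← ih, insertCost]
    split_ifs
    · rw [Real.log_mul (by positivity) (by positivity), add_comm]
    · simp

/-- There are infinitely many positions at which the digit `⌈φ⌉` can be inserted at a total cost
`2 ^ (e n / 4)`: the `j`-th position `u j` is chosen so that its cost is at most
`2 ^ (2 ^ (-j-1) e (u j) / 4)`. -/
lemma exists_positions (φ : ℕ → ℝ) (hpos : ∀ n, 0 < φ n)
    (hB : Filter.atTop.liminf (fun n : ℕ => ((Real.log (φ n) / n : ℝ) : EReal)) = 0)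
    {e : ℝ} (he : 0 < e) :
    ∃ S : Set ℕ, S.Infinite ∧ (∀ i ∈ S, 1 ≤ i) ∧
      ∀ n : ℕ, insertCost S (fun i => ⌈φ (i + 1)⌉₊) n ≤ (2 : ℝ) ^ (e / 4 * n) := by
  set A : ℕ → ℕ := fun i => ⌈φ (i + 1)⌉₊ with hAdef
  set η : ℝ := e / 4 * Real.log 2 with hη
  have hη0 : 0 < η := mul_pos (by linarith) (Real.log_pos one_lt_two)
  have hfreq : ∀ j : ℕ, ∃ᶠ k in atTop,
      1 ≤ k ∧ Real.log (2 * ((A k : ℝ) + 1)) ≤ η / 2 ^ (j + 1) * k := by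
    intro j
    set ζ : ℝ := η / 2 ^ (j + 1) with hζ
    have hζ0 : 0 < ζ := by positivity
    have h1 : ∃ᶠ n : ℕ in atTop, ((Real.log (φ n) / n : ℝ) : EReal) < ((ζ / 4 : ℝ) : EReal) := by
      apply Filter.frequently_lt_of_liminf_lt
      · isBoundedDefault
      · rw [hB]
        exact_mod_cast (by positivity : (0 : ℝ) < ζ / 4)
    obtain ⟨n₁, hn₁⟩ := exists_nat_ge (2 * Real.log 6 / ζ)
    rw [frequently_atTop] at h1 ⊢
    intro b
    obtain ⟨n, hn, hlt⟩ := h1 (b + n₁ + 2)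
    obtain ⟨k, rfl⟩ : ∃ k, n = k + 1 := ⟨n - 1, by omega⟩
    refine ⟨k, by omega, by omega, ?_⟩
    have hlt' : Real.log (φ (k + 1)) / ((k + 1 : ℕ) : ℝ) < ζ / 4 := by exact_mod_cast hlt
    rw [div_lt_iff₀ (by positivity)] at hlt'
    have hk1 : (1 : ℝ) ≤ k := by exact_mod_cast (by omega : 1 ≤ k)
    have hk2 : (n₁ : ℝ) ≤ k := by exact_mod_cast (by omega : n₁ ≤ k)
    have hlog : Real.log (φ (k + 1)) ≤ ζ / 2 * k := by
      push_cast at hlt'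
      nlinarith
    have hφ : φ (k + 1) ≤ Real.exp (ζ / 2 * k) := (Real.log_le_iff_le_exp (hpos _)).1 hlog
    have hexp : 1 ≤ Real.exp (ζ / 2 * k) := Real.one_le_exp (by positivity)
    have hceil : (A k : ℝ) < φ (k + 1) + 1 := Nat.ceil_lt_add_one (hpos _).le
    have hA6 : 2 * ((A k : ℝ) + 1) ≤ 6 * Real.exp (ζ / 2 * k) := by linarith
    have hlog6 : Real.log 6 ≤ ζ / 2 * k := by
      have := hn₁.trans hk2
      rw [div_le_iff₀ hζ0] at this
      linarith
    calc Real.log (2 * ((A k : ℝ) + 1)) ≤ Real.log (6 * Real.exp (ζ / 2 * k)) :=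
          Real.log_le_log (by positivity) hA6
      _ = Real.log 6 + ζ / 2 * k := by
          rw [Real.log_mul (by norm_num) (Real.exp_pos _).ne', Real.log_exp]
      _ ≤ ζ * k := by linarith
  obtain ⟨u, hu, hP⟩ := extraction_forall_of_frequently hfreq
  refine ⟨Set.range u, Set.infinite_range_of_injective hu.injective, ?_, fun n => ?_⟩
  · rintro _ ⟨j, rfl⟩
    exact (hP j).1
  classical
  have hgeom : ∑ j ∈ Finset.range n, (1 / 2 ^ (j + 1) : ℝ) ≤ 1 := by
    have : ∑ j ∈ Finset.range n, (1 / 2 ^ (j + 1) : ℝ) = 1 - 1 / 2 ^ n := by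
      induction n with
      | zero => simp
      | succ n ih =>
        rw [Finset.sum_range_succ, ih, pow_succ]
        field_simp
        ring
    rw [this]
    have : (0 : ℝ) ≤ 1 / 2 ^ n := by positivity
    linarith
  have himg : (Finset.range n).filter (· ∈ Set.range u) =
      ((Finset.range n).filter fun j => u j < n).image u := by
    ext i
    simp only [Finset.mem_filter, Finset.mem_range, Set.mem_range, Finset.mem_image]
    constructor
    · rintro ⟨hi, j, rfl⟩
      exact ⟨j, ⟨lt_of_le_of_lt (hu.le_apply) hi, hi⟩, rfl⟩
    · rintro ⟨j, ⟨_, hj⟩, rfl⟩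
      exact ⟨hj, j, rfl⟩
  have hn0 : (0 : ℝ) ≤ n := Nat.cast_nonneg _
  have hlog : Real.log (insertCost (Set.range u) A n) ≤ η * n := by
    rw [log_insertCost, himg, Finset.sum_image fun x _ y _ h => hu.injective h]
    calc ∑ j ∈ (Finset.range n).filter (fun j => u j < n), Real.log (2 * ((A (u j) : ℝ) + 1))
        ≤ ∑ j ∈ (Finset.range n).filter (fun j => u j < n), η * n * (1 / 2 ^ (j + 1)) := by
          refine Finset.sum_le_sum fun j hj => (hP j).2.trans ?_
          have : (u j : ℝ) ≤ n := by exact_mod_cast (Finset.mem_filter.1 hj).2.le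
          calc η / 2 ^ (j + 1) * u j ≤ η / 2 ^ (j + 1) * n := by gcongr
            _ = η * n * (1 / 2 ^ (j + 1)) := by ring
      _ ≤ ∑ j ∈ Finset.range n, η * n * (1 / 2 ^ (j + 1)) :=
          Finset.sum_le_sum_of_subset_of_nonneg (Finset.filter_subset _ _)
            fun _ _ _ => by positivity
      _ = η * n * ∑ j ∈ Finset.range n, (1 / 2 ^ (j + 1) : ℝ) := by rw [Finset.mul_sum]
      _ ≤ η * n * 1 := by gcongr
      _ = η * n := mul_one _
  have hc := one_le_insertCost (S := Set.range u) (A := A) n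
  rw [Real.log_le_iff_le_exp (by linarith)] at hlog
  rw [Real.rpow_def_of_pos two_pos]
  refine hlog.trans_eq ?_
  rw [hη]
  ring_nf

/-! ### The dimension bound -/

/-- An injection with `|g - g'| ^ p ≤ K |f g - f g'|` has a Hölder inverse of exponent `1 / p`. -/
lemma dimH_le_of_expanding {f : ℝ → ℝ} {G : Set ℝ} {p K : ℝ} (hp : 1 ≤ p) (hK : 0 ≤ K)
    (h : ∀ x ∈ G, ∀ y ∈ G, |x - y| ^ p ≤ K * |f x - f y|) :
    dimH G ≤ dimH (f '' G) * ENNReal.ofReal p := by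
  have hp0 : 0 < p := by linarith
  have hinj : Set.InjOn f G := by
    intro x hx y hy hxy
    have h1 := h x hx y hy
    rw [hxy, sub_self, abs_zero, mul_zero] at h1
    have h2 : |x - y| ^ p = 0 := le_antisymm h1 (by positivity)
    rw [Real.rpow_eq_zero (abs_nonneg _) hp0.ne', abs_eq_zero, sub_eq_zero] at h2
    exact h2
  have hinv := hinj.leftInvOn_invFunOn
  set r : NNReal := ⟨p⁻¹, by positivity⟩ with hr
  have hr0 : 0 < r := by
    rw [← NNReal.coe_pos]
    exact inv_pos.2 hp0
  set C : NNReal := ⟨K ^ p⁻¹, by positivity⟩ with hC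
  have hold : HolderOnWith C r (Function.invFunOn f G) (f '' G) := by
    rintro _ ⟨x, hx, rfl⟩ _ ⟨y, hy, rfl⟩
    rw [hinv hx, hinv hy, edist_nndist, edist_nndist, ← ENNReal.coe_rpow_of_nonneg _ r.coe_nonneg,
      ← ENNReal.coe_mul, ENNReal.coe_le_coe, ← NNReal.coe_le_coe]
    push_cast
    rw [Real.dist_eq, Real.dist_eq]
    change |x - y| ≤ K ^ p⁻¹ * |f x - f y| ^ p⁻¹
    rw [← Real.mul_rpow hK (abs_nonneg _)]
    exact (Real.le_rpow_inv_iff_of_pos (abs_nonneg _) (by positivity) hp0).2 (h x hx y hy)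
  have hdim := hold.dimH_image_le hr0
  rw [hinv.image_image] at hdim
  refine hdim.trans_eq ?_
  rw [div_eq_mul_inv]
  congr 1
  rw [← ENNReal.coe_inv hr0.ne', ENNReal.ofReal]
  congr 1
  rw [← NNReal.coe_inj, NNReal.coe_inv, hr, Real.coe_toNNReal _ hp0.le]
  exact inv_inv p

lemma mem_F2_of_insert {φ : ℕ → ℝ} (hS : S.Infinite) (hS1 : ∀ i ∈ S, 1 ≤ i)
    {x : ℕ → ℝ} (hx : IsCF (insertDigits S (fun i => ⌈φ (i + 1)⌉₊) a) x) : x 0 ∈ F2 φ := by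
  refine ⟨⟨hx.pos 0, hx.lt_one 0⟩, hx.irrational, ?_⟩
  refine (hS.image (f := fun i => i + 1) fun i _ j _ h => by simpa using h).mono ?_
  rintro _ ⟨i, hi, rfl⟩
  have hi1 := hS1 i hi
  have hdig : φ (i + 1) ≤ (pq (x 0) (i + 1) : ℝ) := by
    rw [hx.pq_eq, insertDigits, if_pos hi]
    exact Nat.le_ceil _
  have h1 : (1 : ℝ) ≤ (pq (x 0) i : ℝ) := by
    obtain ⟨k, rfl⟩ : ∃ k, i = k + 1 := ⟨i - 1, by omega⟩
    rw [hx.pq_eq]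
    exact hx.one_le_real k
  have h2 : (1 : ℝ) ≤ (pq (x 0) (i + 1 + 1) : ℝ) := by
    rw [hx.pq_eq]
    exact hx.one_le_real (i + 1)
  have h0 : (0 : ℝ) ≤ (pq (x 0) (i + 1) : ℝ) := Nat.cast_nonneg _
  exact ⟨i, i + 1, hi1, Nat.le_succ i, by omega, le_rfl, by omega, by nlinarith, by nlinarith⟩

lemma one_le_dimH_F2_mul (φ : ℕ → ℝ) (hpos : ∀ n, 0 < φ n)
    (hB : Filter.atTop.liminf (fun n : ℕ => ((Real.log (φ n) / n : ℝ) : EReal)) = 0)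
    {e : ℝ} (he0 : 0 < e) (he1 : e ≤ 1) : 1 ≤ dimH (F2 φ) * ENNReal.ofReal (1 + 4 * e) := by
  obtain ⟨S, hS, hS1, hcost⟩ := exists_positions φ hpos hB he0
  have hA : ∀ n, 1 ≤ (fun i => ⌈φ (i + 1)⌉₊) n := fun n => Nat.ceil_pos.2 (hpos _)
  refine (one_le_dimH_growthSet he0).trans ?_
  rw [dimH_iUnion]
  refine iSup_le fun C => ?_
  have hcf : ∀ g : ℝ, ∃ x : ℕ → ℝ, g ∈ growthSet e C →
      IsCF (insertDigits S (fun i => ⌈φ (i + 1)⌉₊) fun n => pq g (n + 1)) x := by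
    intro g
    by_cases hg : g ∈ growthSet e C
    · obtain ⟨x, hx⟩ := exists_isCF _
        (insertDigits_pos (S := S) hA (isCF_of_irrational hg.1 hg.2.1).one_le)
      exact ⟨x, fun _ => hx⟩
    · exact ⟨fun _ => 0, fun h => absurd h hg⟩
  choose x hx using hcf
  have hC1 : (1 : ℝ) ≤ (C : ℝ) + 1 := by linarith [Nat.cast_nonneg (α := ℝ) C]
  have hexp : ∀ g ∈ growthSet e C, ∀ g' ∈ growthSet e C,
      |g - g'| ^ (1 + 4 * e) ≤ 432 * ((C : ℝ) + 1) ^ 6 * |x g 0 - x g' 0| := fun g hg g' hg' =>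
    key_estimate he0 he1 hC1 hA hcost (isCF_of_irrational hg.1 hg.2.1)
      (isCF_of_irrational hg'.1 hg'.2.1) hg.2.2 hg'.2.2 (hx g hg) (hx g' hg')
  refine (dimH_le_of_expanding (f := fun g => x g 0) (by linarith) (by positivity) hexp).trans ?_
  refine mul_le_mul_left (dimH_mono ?_) _
  rintro _ ⟨g, hg, rfl⟩
  exact mem_F2_of_insert hS hS1 (hx g hg)

theorem dimH_F2_of_liminf_eq_zero (φ : ℕ → ℝ) (hpos : ∀ n, 0 < φ n)
    (hB : Filter.atTop.liminf (fun n : ℕ => ((Real.log (φ n) / n : ℝ) : EReal)) = 0) :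
    dimH (F2 φ) = 1 := by
  have hle : dimH (F2 φ) ≤ 1 := Real.dimH_univ ▸ dimH_mono (Set.subset_univ _)
  refine le_antisymm hle (not_lt.1 fun hlt => ?_)
  obtain ⟨d, hd⟩ : ∃ d : NNReal, (d : ℝ≥0∞) = dimH (F2 φ) :=
    ⟨_, ENNReal.coe_toNNReal (hlt.trans ENNReal.one_lt_top).ne⟩
  rw [← hd] at hlt
  have hd1 : (d : ℝ) < 1 := by exact_mod_cast hlt
  have hd0 : (0 : ℝ) ≤ d := d.coe_nonneg
  -- with `e = (1 - d) / 8` the factor `1 + 4 e` is too small to bring `d` up to `1`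
  have key := one_le_dimH_F2_mul φ hpos hB (e := (1 - d) / 8) (by linarith) (by linarith)
  rw [← hd, ENNReal.ofReal, ← ENNReal.coe_mul, ← ENNReal.coe_one, ENNReal.coe_le_coe,
    ← NNReal.coe_le_coe, NNReal.coe_mul, Real.coe_toNNReal _ (by linarith)] at key
  push_cast at key
  nlinarith
end
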